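/- arXiv:2411.06541 — 9 statements merged into one kernel-verified Lean document; each statement's English description precedes it below -/
import Mathlib

section
/- Fix integers q ≥ 3 and d ≥ 2, a real β ≥ 1, and a symmetric interaction matrix A ∈ ℝ_{≥0}^{q×q} satisfying: (a) A ≥ 1_q 1_q^T entrywise with strict inequality in at least one entry; (b) |𝓜(d,A)| ≥ 2 and there exist c ∈ [q] and a₁, a₂ ∈ 𝓜(d,A) with A_{c,a₁} ≠ A_{c,a₂}. Let B = B(β,A). Let ζ be any probability distribution on 𝓜(d,A) and define the mixture μ^{(ζ)} := Σ_{a∈𝓜(d,A)} ζ(a) · δ_a^{⊗d}, a probability distribution on ([q] ∪ {c*})^d. Then F_{B,d}(μ^{(ζ)}) = Σ_{a∈𝓜(d,A)} ζ(a) · F_{B,d}(δ_a^{⊗d}). -/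
open scoped BigOperators Classical
open MeasureTheory

/-- A probability distribution on a finite type, represented as a nonnegative
function summing to one. -/
def IsProbDist {ι : Type*} [Fintype ι] (μ : ι → ℝ) : Prop :=
  (∀ x, 0 ≤ μ x) ∧ ∑ x, μ x = 1

/-- The unnormalized belief propagation functional `G_c(μ) = E_{τ∼μ}[∏ i, A c (τ i)]`. -/
noncomputable def Gfun {q d : ℕ} (A : Matrix (Fin q) (Fin q) ℝ)
    (μ : (Fin d → Fin q) → ℝ) (c : Fin q) : ℝ :=
  ∑ σ : Fin d → Fin q, μ σ * ∏ i, A c (σ i)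

/-- The belief propagation functional `F_{A,d,c}(μ) = G_c(μ) / ∑ b, G_b(μ)`. -/
noncomputable def Ffun {q d : ℕ} (A : Matrix (Fin q) (Fin q) ℝ)
    (μ : (Fin d → Fin q) → ℝ) (c : Fin q) : ℝ :=
  Gfun A μ c / ∑ b, Gfun A μ b

/-- The product measure on `[k]^d` with marginals `ν i`. -/
noncomputable def prodMeasure {d k : ℕ} (ν : Fin d → Fin k → ℝ) :
    (Fin d → Fin k) → ℝ :=
  fun σ => ∏ i, ν i (σ i)

/-- The point mass `δ_b` at a spin `b`. -/
noncomputable def pointMass {k : ℕ} (b : Fin k) : Fin k → ℝ :=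
  fun c => if c = b then 1 else 0

/-- The marginal of a distribution `μ` on `[k]^d` at coordinate `i`. -/
noncomputable def marg {d k : ℕ} (μ : (Fin d → Fin k) → ℝ) (i : Fin d) : Fin k → ℝ :=
  fun b => ∑ σ : Fin d → Fin k, if σ i = b then μ σ else 0

/-- The tilt `λ ⋆ μ` of a distribution `μ` on `[k]^d` by an external field `λ`. -/
noncomputable def tilt {d k : ℕ} (lam : Fin d → Fin k → ℝ)
    (μ : (Fin d → Fin k) → ℝ) : (Fin d → Fin k) → ℝ :=
  fun σ => (μ σ * ∏ i, lam i (σ i)) / ∑ σ' : Fin d → Fin k, μ σ' * ∏ i, lam i (σ' i)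

/-- The `(q+1) × (q+1)` interaction matrix `B(β,A) = [[β, 1ᵀ],[1, A]]`; the index `0`
plays the role of the special spin `c*`. -/
noncomputable def Bmat {q : ℕ} (β : ℝ) (A : Matrix (Fin q) (Fin q) ℝ) :
    Matrix (Fin (q+1)) (Fin (q+1)) ℝ :=
  Matrix.of fun i j =>
    if hi : i = 0 then (if j = 0 then β else 1)
    else if hj : j = 0 then 1 else A (i.pred hi) (j.pred hj)

/-- `𝓜(d,A) = argmax_{b} ∑ c, A c b ^ d`. -/
def Mset {q : ℕ} (d : ℕ) (A : Matrix (Fin q) (Fin q) ℝ) : Set (Fin q) :=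
  {b | ∀ b', ∑ c, A c b' ^ d ≤ ∑ c, A c b ^ d}

/-- `max_{b ∈ [q]} ∑ c, A c b ^ d` (as a supremum over the finite nonempty type `Fin q`). -/
noncomputable def maxCol {q : ℕ} (d : ℕ) (A : Matrix (Fin q) (Fin q) ℝ) : ℝ :=
  ⨆ b, ∑ c, A c b ^ d

theorem aux_G_point {q d : ℕ} (M : Matrix (Fin q) (Fin q) ℝ) (a c : Fin q) :
    Gfun M (prodMeasure (fun _ : Fin d => pointMass a)) c = M c a ^ d := by
  unfold Gfun prodMeasure pointMass
  rw [Finset.sum_eq_single (fun _ => a)]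
  · simp
  · intro σ _ hσ
    obtain ⟨i, hi⟩ := Function.ne_iff.mp hσ
    rw [Finset.prod_eq_zero (Finset.mem_univ i) (by simp [hi]), zero_mul]
  · simp

theorem aux_G_mix {q d k : ℕ} (M : Matrix (Fin q) (Fin q) ℝ) (ζ : Fin k → ℝ)
    (ν : Fin k → (Fin d → Fin q) → ℝ) (c : Fin q) :
    Gfun M (fun σ => ∑ a, ζ a * ν a σ) c = ∑ a, ζ a * Gfun M (ν a) c := by
  unfold Gfun
  simp_rw [Finset.sum_mul, Finset.mul_sum]
  rw [Finset.sum_comm]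
  simp_rw [mul_assoc]

/-- Lemma: `F_B` is affine on mixtures of point masses from `𝓜(d,A)`.
Under the standing assumptions on `q, d, β, A`, if `ζ` is a probability
distribution supported on `𝓜(d,A)` and
`μ^{(ζ)} = ∑_{a} ζ(a) · δ_{a}^{⊗d}` (where the spin `a ∈ [q]` is embedded in
`[q] ∪ {c*}` as `a.succ`), then
`F_B(μ^{(ζ)}) = ∑_a ζ(a) · F_B(δ_a^{⊗d})` coordinatewise. -/
theorem stmt3 (q d : ℕ) (hq : 3 ≤ q) (hd : 2 ≤ d) (β : ℝ) (hβ : 1 ≤ β)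
    (A : Matrix (Fin q) (Fin q) ℝ) (hsymm : A.IsSymm)
    (hge : ∀ c b, (1:ℝ) ≤ A c b) (hstrict : ∃ c b, (1:ℝ) < A c b)
    (hMcard : 2 ≤ (Mset d A).ncard)
    (hMne : ∃ c, ∃ a₁ ∈ Mset d A, ∃ a₂ ∈ Mset d A, A c a₁ ≠ A c a₂)
    (ζ : Fin q → ℝ) (hζ0 : ∀ a, 0 ≤ ζ a) (hζ1 : ∑ a, ζ a = 1)
    (hζsupp : ∀ a, a ∉ Mset d A → ζ a = 0) :
    ∀ c : Fin (q+1),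
      Ffun (Bmat β A)
        (fun σ => ∑ a, ζ a * prodMeasure (fun _ : Fin d => pointMass a.succ) σ) c =
      ∑ a, ζ a * Ffun (Bmat β A) (prodMeasure (fun _ : Fin d => pointMass a.succ)) c := by
  have hcol : ∀ a : Fin q, ∑ b, Bmat β A b a.succ ^ d = 1 + ∑ c, A c a ^ d := by
    intro a
    rw [Fin.sum_univ_succ]
    simp [Bmat]
  obtain ⟨_, a0, ha0, _⟩ := hMne
  have hS : ∀ a, ζ a * (1 + ∑ c, A c a ^ d) = ζ a * (1 + ∑ c, A c a0 ^ d) := by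
    intro a
    by_cases ha : a ∈ Mset d A
    · rw [le_antisymm (ha0 a) (ha a0)]
    · simp [hζsupp a ha]
  have hS' : ∀ a x, ζ a * (x / (1 + ∑ c, A c a ^ d)) = ζ a * x / (1 + ∑ c, A c a0 ^ d) := by
    intro a x
    by_cases ha : a ∈ Mset d A
    · rw [le_antisymm (ha0 a) (ha a0), mul_div_assoc]
    · simp [hζsupp a ha]
  intro c
  unfold Ffun
  simp_rw [aux_G_mix, aux_G_point]
  rw [Finset.sum_comm]
  simp_rw [← Finset.mul_sum, hcol, hS, hS']
  rw [← Finset.sum_mul, hζ1, one_mul, Finset.sum_div]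
end

section
/- Fix integers q ≥ 3 and d ≥ 2, a real β ≥ 1, and a symmetric interaction matrix A ∈ ℝ_{≥0}^{q×q} satisfying: (a) A ≥ 1_q 1_q^T entrywise with strict inequality in at least one entry; (b) |𝓜(d,A)| ≥ 2 and there exist c ∈ [q] and a₁, a₂ ∈ 𝓜(d,A) with A_{c,a₁} ≠ A_{c,a₂}. Let B = B(β,A). Then the set 𝓕^{prod}_{B,d} := { F_{B,d}(ν) : ν a product probability measure on ([q] ∪ {c*})^d } is not a convex subset of the simplex Δ_{q+1}; in particular it is strictly contained in 𝓕_{B,d} := { F_{B,d}(μ) : μ an arbitrary probability measure on ([q] ∪ {c*})^d }. -/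
open scoped BigOperators Classical
open MeasureTheory

theorem amgm_le {d : ℕ} (hd : 2 ≤ d) (x : Fin d → ℝ) (hx : ∀ i, 0 ≤ x i) :
    ∏ i, x i ≤ ∑ i, (d:ℝ)⁻¹ * x i ^ d := by
  have h := Real.geom_mean_le_arith_mean_weighted Finset.univ (fun _ : Fin d => (d:ℝ)⁻¹)
    (fun i => x i ^ d) (fun i _ => by positivity)
    (by simp; field_simp) (fun i _ => pow_nonneg (hx i) d)
  have h2 : ∀ i, (x i ^ d) ^ ((d:ℝ)⁻¹) = x i := fun i =>
    Real.pow_rpow_inv_natCast (hx i) (by omega)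
  simpa [h2] using h

theorem amgm_eq {d : ℕ} (hd : 2 ≤ d) (x : Fin d → ℝ) (hx : ∀ i, 0 ≤ x i)
    (he : ∏ i, x i = ∑ i, (d:ℝ)⁻¹ * x i ^ d) (i j : Fin d) : x i = x j := by
  have h2 : ∀ i, (x i ^ d) ^ ((d:ℝ)⁻¹) = x i := fun i =>
    Real.pow_rpow_inv_natCast (hx i) (by omega)
  have hd0 : (0:ℝ) < (d:ℝ)⁻¹ := by positivity
  have h := (Real.geom_mean_eq_arith_mean_weighted_iff_of_pos Finset.univ (fun _ : Fin d => (d:ℝ)⁻¹)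
    (fun i => x i ^ d) (fun i _ => hd0)
    (by simp; field_simp) (fun i _ => pow_nonneg (hx i) d)).1 (by simpa [h2] using he)
  have h3 : x i ^ d = x j ^ d := h i (Finset.mem_univ _) j (Finset.mem_univ _)
  exact (pow_left_inj₀ (hx i) (hx j) (by omega)).1 h3

@[simp] theorem Bmat_00 {q : ℕ} (β : ℝ) (A : Matrix (Fin q) (Fin q) ℝ) : Bmat β A 0 0 = β := by
  simp [Bmat]
@[simp] theorem Bmat_0s {q : ℕ} (β : ℝ) (A : Matrix (Fin q) (Fin q) ℝ) (b : Fin q) :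
    Bmat β A 0 b.succ = 1 := by
  simp [Bmat]
@[simp] theorem Bmat_s0 {q : ℕ} (β : ℝ) (A : Matrix (Fin q) (Fin q) ℝ) (b : Fin q) :
    Bmat β A b.succ 0 = 1 := by
  simp [Bmat]
@[simp] theorem Bmat_ss {q : ℕ} (β : ℝ) (A : Matrix (Fin q) (Fin q) ℝ) (c b : Fin q) :
    Bmat β A c.succ b.succ = A c b := by
  simp [Bmat]

theorem Bmat_ge {q : ℕ} {β : ℝ} (hβ : 1 ≤ β) {A : Matrix (Fin q) (Fin q) ℝ}
    (hge : ∀ c b, (1:ℝ) ≤ A c b) (i j : Fin (q+1)) : 1 ≤ Bmat β A i j := by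
  refine Fin.cases ?_ (fun i => ?_) i <;> refine Fin.cases ?_ (fun j => ?_) j <;> simp [hβ, hge]

theorem col_le {q d : ℕ} {β m : ℝ} {A : Matrix (Fin q) (Fin q) ℝ}
    (hmq : (q:ℝ) < m) (hm : ∀ b, ∑ c, A c b ^ d ≤ m) (j : Fin (q+1)) :
    ∑ c : Fin q, Bmat β A c.succ j ^ d ≤ m := by
  refine Fin.cases ?_ (fun j => ?_) j
  · simpa using hmq.le
  · simpa using hm j

theorem S_mid {q d : ℕ} (hd : 2 ≤ d) {β m : ℝ} {A : Matrix (Fin q) (Fin q) ℝ}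
    (hmq : (q:ℝ) < m) (hm : ∀ b, ∑ c, A c b ^ d ≤ m) (σ : Fin d → Fin (q+1)) :
    ∑ c : Fin q, ∑ i, (d:ℝ)⁻¹ * Bmat β A c.succ (σ i) ^ d ≤ m := by
  rw [Finset.sum_comm]
  simp_rw [← Finset.mul_sum]
  rw [inv_mul_le_iff₀ (by positivity)]
  calc _ ≤ ∑ i : Fin d, m := Finset.sum_le_sum fun i _ => col_le hmq hm _
    _ = _ := by simp

theorem S_le {q d : ℕ} (hd : 2 ≤ d) {β m : ℝ} (hβ : 1 ≤ β) {A : Matrix (Fin q) (Fin q) ℝ}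
    (hge : ∀ c b, (1:ℝ) ≤ A c b)
    (hmq : (q:ℝ) < m) (hm : ∀ b, ∑ c, A c b ^ d ≤ m) (σ : Fin d → Fin (q+1)) :
    ∑ c : Fin q, ∏ i, Bmat β A c.succ (σ i) ≤ m * ∏ i, Bmat β A 0 (σ i) := by
  have hB := Bmat_ge hβ hge
  have h1 : ∑ c : Fin q, ∏ i, Bmat β A c.succ (σ i) ≤
      ∑ c : Fin q, ∑ i, (d:ℝ)⁻¹ * Bmat β A c.succ (σ i) ^ d :=
    Finset.sum_le_sum fun c _ => amgm_le hd _ (fun i => zero_le_one.trans (hB _ _))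
  have h2 := S_mid hd hmq hm σ (β := β)
  have h3 : 1 ≤ ∏ i, Bmat β A 0 (σ i) := Finset.one_le_prod (fun i _ => hB _ _)
  have : 0 ≤ m := (Nat.cast_nonneg q).trans hmq.le
  nlinarith

theorem S_eq {q d : ℕ} (hd : 2 ≤ d) {β m : ℝ} (hβ : 1 ≤ β) {A : Matrix (Fin q) (Fin q) ℝ}
    (hge : ∀ c b, (1:ℝ) ≤ A c b)
    (hmq : (q:ℝ) < m) (hm : ∀ b, ∑ c, A c b ^ d ≤ m) (σ : Fin d → Fin (q+1))
    (he : ∑ c : Fin q, ∏ i, Bmat β A c.succ (σ i) = m * ∏ i, Bmat β A 0 (σ i)) :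
    (∀ i, σ i ≠ 0) ∧ ∀ (c : Fin q) (i j), Bmat β A c.succ (σ i) = Bmat β A c.succ (σ j) := by
  have hB := Bmat_ge hβ hge
  have h0 : ∀ c ∈ Finset.univ, ∏ i, Bmat β A (Fin.succ c) (σ i) ≤
      ∑ i, (d:ℝ)⁻¹ * Bmat β A c.succ (σ i) ^ d :=
    fun c _ => amgm_le hd _ (fun i => zero_le_one.trans (hB _ _))
  have h1 := Finset.sum_le_sum h0
  have h2 := S_mid hd hmq hm σ (β := β)
  have h3 : 1 ≤ ∏ i, Bmat β A 0 (σ i) := Finset.one_le_prod (fun i _ => hB _ _)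
  have hm0 : 0 ≤ m := (Nat.cast_nonneg q).trans hmq.le
  have h4 : m ≤ m * ∏ i, Bmat β A 0 (σ i) := by nlinarith
  constructor
  · intro i hi
    have h5 : ∑ i : Fin d, ∑ c : Fin q, Bmat β A c.succ (σ i) ^ d < ∑ i : Fin d, m :=
      Finset.sum_lt_sum (fun i _ => col_le hmq hm _)
        ⟨i, Finset.mem_univ _, by rw [hi]; simpa using hmq⟩
    have h6 : ∑ c : Fin q, ∑ i, (d:ℝ)⁻¹ * Bmat β A c.succ (σ i) ^ d < m := by
      rw [Finset.sum_comm]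
      simp_rw [← Finset.mul_sum]
      rw [inv_mul_lt_iff₀ (by positivity)]
      simpa using h5
    linarith
  · intro c
    have h5 := (Finset.sum_eq_sum_iff_of_le h0).1 (by linarith) c (Finset.mem_univ _)
    exact amgm_eq hd _ (fun i => zero_le_one.trans (hB _ _)) h5

theorem sum_prodMeasure {d k : ℕ} (ν : Fin d → Fin k → ℝ) (h : ∀ i, IsProbDist (ν i)) :
    IsProbDist (prodMeasure ν) := by
  refine ⟨fun σ => Finset.prod_nonneg fun i _ => (h i).1 _, ?_⟩
  unfold prodMeasure
  rw [← Fintype.prod_sum]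
  simp [(h _).2]

theorem core {q d : ℕ} (hd : 2 ≤ d) {β m : ℝ} (hβ : 1 ≤ β) {A : Matrix (Fin q) (Fin q) ℝ}
    (hge : ∀ c b, (1:ℝ) ≤ A c b)
    (hmq : (q:ℝ) < m) (hm : ∀ b, ∑ c, A c b ^ d ≤ m) (ν : Fin d → Fin (q+1) → ℝ)
    (hν : ∀ i, IsProbDist (ν i)) (h0 : Ffun (Bmat β A) (prodMeasure ν) 0 = 1 / (1 + m)) (c : Fin q) :
    ∃ b, Ffun (Bmat β A) (prodMeasure ν) c.succ = A c b ^ d / (1 + m) := by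
  have hP := sum_prodMeasure ν hν
  have hB := Bmat_ge hβ hge
  have hm0 : 0 ≤ m := (Nat.cast_nonneg q).trans hmq.le
  set μ := prodMeasure ν with hμ
  have hG0 : 1 ≤ Gfun (Bmat β A) μ 0 := by
    rw [← hP.2]
    refine Finset.sum_le_sum fun σ _ => ?_
    have h3 : 1 ≤ ∏ i, Bmat β A 0 (σ i) := Finset.one_le_prod (fun i _ => hB _ _)
    have := hP.1 σ
    nlinarith
  have hGp : ∀ c, 0 ≤ Gfun (Bmat β A) μ c := fun c =>
    Finset.sum_nonneg fun σ _ => mul_nonneg (hP.1 σ)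
      (Finset.prod_nonneg fun i _ => zero_le_one.trans (hB _ _))
  have hS : ∑ c : Fin q, Gfun (Bmat β A) μ c.succ = m * Gfun (Bmat β A) μ 0 := by
    have hpos : 0 ≤ ∑ c : Fin q, Gfun (Bmat β A) μ c.succ := Finset.sum_nonneg fun c _ => hGp _
    unfold Ffun at h0
    rw [Fin.sum_univ_succ, div_eq_div_iff (by linarith) (by linarith)] at h0
    linarith
  have hterm : ∀ σ ∈ Finset.univ, μ σ * ∑ c : Fin q, ∏ i, Bmat β A c.succ (σ i) ≤
      μ σ * (m * ∏ i, Bmat β A 0 (σ i)) := fun σ _ =>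
    mul_le_mul_of_nonneg_left (S_le hd hβ hge hmq hm σ) (hP.1 σ)
  have hsum : ∑ σ, μ σ * ∑ c : Fin q, ∏ i, Bmat β A c.succ (σ i) =
      ∑ σ, μ σ * (m * ∏ i, Bmat β A 0 (σ i)) := by
    unfold Gfun at hS
    rw [Finset.sum_comm, Finset.mul_sum] at hS
    simp_rw [← Finset.mul_sum] at hS
    rw [hS, Finset.mul_sum]
    exact Finset.sum_congr rfl fun σ _ => by ring
  have hkey : ∀ σ, μ σ ≠ 0 → (∀ i, σ i ≠ 0) ∧
      ∀ (c : Fin q) (i j), Bmat β A c.succ (σ i) = Bmat β A c.succ (σ j) := by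
    intro σ hσ
    have := (Finset.sum_eq_sum_iff_of_le hterm).1 hsum σ (Finset.mem_univ _)
    exact S_eq hd hβ hge hmq hm σ (mul_left_cancel₀ hσ this)
  obtain ⟨σ₀, hσ₀⟩ : ∃ σ, μ σ ≠ 0 := by
    by_contra! h
    have := hP.2
    simp [h] at this
  let z : Fin d := ⟨0, by omega⟩
  let o : Fin d := ⟨1, by omega⟩
  have hzo : o ≠ z := by simp [z, o]
  obtain ⟨b, hb⟩ := Fin.exists_succ_eq_of_ne_zero ((hkey σ₀ hσ₀).1 z)
  have hcol : ∀ σ, μ σ ≠ 0 → ∀ i, Bmat β A c.succ (σ i) = A c b := by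
    intro σ hσ i
    have hne : μ (Function.update σ z (σ₀ z)) ≠ 0 := by
      simp only [hμ, prodMeasure, Finset.prod_ne_zero_iff] at hσ hσ₀ ⊢
      intro i _
      by_cases hi : i = z
      · subst hi; simpa using hσ₀ z (Finset.mem_univ _)
      · simpa [Function.update_of_ne hi] using hσ i (Finset.mem_univ _)
    have h1 := (hkey _ hne).2 c o z
    rw [Function.update_of_ne hzo, Function.update_self, ← hb, Bmat_ss] at h1
    rw [(hkey σ hσ).2 c i o, h1]
  have hG0' : Gfun (Bmat β A) μ 0 = 1 := by
    rw [← hP.2]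
    refine Finset.sum_congr rfl fun σ _ => ?_
    by_cases hσ : μ σ = 0
    · simp [hσ]
    · rw [Finset.prod_eq_one, mul_one]
      intro i _
      obtain ⟨b, hb⟩ := Fin.exists_succ_eq_of_ne_zero ((hkey σ hσ).1 i)
      rw [← hb, Bmat_0s]
  refine ⟨b, ?_⟩
  have hGc : Gfun (Bmat β A) μ c.succ = A c b ^ d := by
    have : Gfun (Bmat β A) μ c.succ = ∑ σ, μ σ * A c b ^ d := by
      refine Finset.sum_congr rfl fun σ _ => ?_
      by_cases hσ : μ σ = 0
      · simp [hσ]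
      · simp [hcol σ hσ]
    rw [this, ← Finset.sum_mul, hP.2, one_mul]
  unfold Ffun
  rw [Fin.sum_univ_succ, hS, hG0', hGc, mul_one]

theorem pm_prob {k : ℕ} (b : Fin k) : IsProbDist (pointMass b) := by
  refine ⟨fun x => ?_, by simp [pointMass]⟩
  unfold pointMass; split_ifs <;> norm_num

theorem G_pm {k d : ℕ} (M : Matrix (Fin k) (Fin k) ℝ) (b c : Fin k) :
    Gfun M (prodMeasure (fun _ : Fin d => pointMass b)) c = M c b ^ d := by
  have : ∀ σ : Fin d → Fin k, prodMeasure (fun _ : Fin d => pointMass b) σ * ∏ i, M c (σ i)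
      = ∏ i, (pointMass b (σ i) * M c (σ i)) := fun σ => by
    rw [Finset.prod_mul_distrib]; rfl
  unfold Gfun
  simp_rw [this]
  rw [← Fintype.prod_sum (fun (_ : Fin d) j => pointMass b j * M c j)]
  simp [pointMass]

theorem F_pm {q d : ℕ} {β m : ℝ} {A : Matrix (Fin q) (Fin q) ℝ} {a : Fin q}
    (ha : ∑ c, A c a ^ d = m) (c : Fin (q+1)) :
    Ffun (Bmat β A) (prodMeasure (fun _ : Fin d => pointMass a.succ)) c =
      Bmat β A c a.succ ^ d / (1 + m) := by
  unfold Ffun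
  simp_rw [G_pm]
  rw [Fin.sum_univ_succ]
  simp [ha]

theorem G_mix {k d : ℕ} (M : Matrix (Fin k) (Fin k) ℝ) (μ₁ μ₂ : (Fin d → Fin k) → ℝ) (s t : ℝ)
    (c : Fin k) : Gfun M (s • μ₁ + t • μ₂) c = s * Gfun M μ₁ c + t * Gfun M μ₂ c := by
  simp only [Gfun, Finset.mul_sum, ← Finset.sum_add_distrib]
  exact Finset.sum_congr rfl fun σ _ => by simp; ring

/-- Nonconvexity of the image of product measures under `F_B`.
Under the standing assumptions on `q, d, β, A`, the set
`𝓕^{prod}_{B,d} = {F_B(ν) : ν product probability measure on ([q] ∪ {c*})^d}`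
is not convex, and it is strictly contained in
`𝓕_{B,d} = {F_B(μ) : μ arbitrary probability measure on ([q] ∪ {c*})^d}`. -/
theorem stmt4 (q d : ℕ) (hq : 3 ≤ q) (hd : 2 ≤ d) (β : ℝ) (hβ : 1 ≤ β)
    (A : Matrix (Fin q) (Fin q) ℝ) (hsymm : A.IsSymm)
    (hge : ∀ c b, (1:ℝ) ≤ A c b) (hstrict : ∃ c b, (1:ℝ) < A c b)
    (hMcard : 2 ≤ (Mset d A).ncard)
    (hMne : ∃ c, ∃ a₁ ∈ Mset d A, ∃ a₂ ∈ Mset d A, A c a₁ ≠ A c a₂) :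
    ¬ Convex ℝ {p : Fin (q+1) → ℝ | ∃ ν : Fin d → Fin (q+1) → ℝ,
        (∀ i, IsProbDist (ν i)) ∧ p = Ffun (Bmat β A) (prodMeasure ν)} ∧
    {p : Fin (q+1) → ℝ | ∃ ν : Fin d → Fin (q+1) → ℝ,
        (∀ i, IsProbDist (ν i)) ∧ p = Ffun (Bmat β A) (prodMeasure ν)} ⊂
      {p : Fin (q+1) → ℝ | ∃ μ : (Fin d → Fin (q+1)) → ℝ,
        IsProbDist μ ∧ p = Ffun (Bmat β A) μ} := by
  obtain ⟨c, a₁, h₁, a₂, h₂, hne⟩ := hMne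
  obtain ⟨m, hm₁⟩ : ∃ m, ∑ c, A c a₁ ^ d = m := ⟨_, rfl⟩
  have hm₂ : ∑ c, A c a₂ ^ d = m := by rw [← hm₁]; exact le_antisymm (h₁ _) (h₂ _)
  have hm : ∀ b, ∑ c, A c b ^ d ≤ m := fun b => hm₁ ▸ h₁ b
  have hmq : (q:ℝ) < m := by
    obtain ⟨c', b', hs⟩ := hstrict
    refine lt_of_lt_of_le ?_ (hm b')
    have : ∑ c : Fin q, (1:ℝ) < ∑ c, A c b' ^ d :=
      Finset.sum_lt_sum (fun c _ => one_le_pow₀ (hge _ _))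
        ⟨c', Finset.mem_univ _, one_lt_pow₀ hs (by omega)⟩
    simpa using this
  have hm0 : 0 < 1 + m := by have := Nat.cast_nonneg (α := ℝ) q; linarith
  set P := {p : Fin (q+1) → ℝ | ∃ ν : Fin d → Fin (q+1) → ℝ,
        (∀ i, IsProbDist (ν i)) ∧ p = Ffun (Bmat β A) (prodMeasure ν)} with hP
  set μ₁ := prodMeasure (fun _ : Fin d => pointMass a₁.succ) with hμ₁
  set μ₂ := prodMeasure (fun _ : Fin d => pointMass a₂.succ) with hμ₂
  have hp₁ : IsProbDist μ₁ := sum_prodMeasure _ fun _ => pm_prob _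
  have hp₂ : IsProbDist μ₂ := sum_prodMeasure _ fun _ => pm_prob _
  have main : ¬ ∀ s t : ℝ, 0 ≤ s → 0 ≤ t → s + t = 1 →
      s • Ffun (Bmat β A) μ₁ + t • Ffun (Bmat β A) μ₂ ∈ P := by
    intro H
    have hxy : A c a₁ ^ d / (1 + m) ≠ A c a₂ ^ d / (1 + m) := by
      intro h
      rw [div_left_inj' hm0.ne'] at h
      exact hne ((pow_left_inj₀ (zero_le_one.trans (hge _ _)) (zero_le_one.trans (hge _ _))
        (by omega)).1 h)
    have hfin : (Set.range fun b => A c b ^ d / (1 + m)).Finite := Set.finite_range _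
    have hsub : (fun t : ℝ => (1 - t) * (A c a₁ ^ d / (1 + m)) + t * (A c a₂ ^ d / (1 + m))) ''
        Set.Icc 0 1 ⊆ Set.range fun b => A c b ^ d / (1 + m) := by
      rintro _ ⟨t, ⟨ht0, ht1⟩, rfl⟩
      obtain ⟨ν, hν, he⟩ := H (1 - t) t (by linarith) ht0 (by ring)
      have e0 := congrFun he 0
      have ec := congrFun he c.succ
      simp only [Pi.add_apply, Pi.smul_apply, smul_eq_mul, hμ₁, hμ₂, F_pm hm₁, F_pm hm₂,
        Bmat_0s, Bmat_ss, one_pow] at e0 ec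
      obtain ⟨b, hb⟩ := core hd hβ hge hmq hm ν hν (by rw [← e0]; ring) c
      exact ⟨b, by simp only []; rw [← hb, ← ec]⟩
    have hinj : Set.InjOn (fun t : ℝ => (1 - t) * (A c a₁ ^ d / (1 + m)) +
        t * (A c a₂ ^ d / (1 + m))) (Set.Icc 0 1) := by
      intro s _ t _ h
      have h' : (s - t) * (A c a₂ ^ d / (1 + m) - A c a₁ ^ d / (1 + m)) = 0 := by
        simp only [] at h; linear_combination h
      rcases mul_eq_zero.1 h' with h' | h'
      · linarith
      · exact absurd (by linarith) hxy
    exact ((Set.Icc_infinite (zero_lt_one (α := ℝ))).image hinj) (hfin.subset hsub)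
  refine ⟨fun hC => main fun s t hs ht hst => hC ⟨_, fun _ => pm_prob _, rfl⟩
    ⟨_, fun _ => pm_prob _, rfl⟩ hs ht hst, ?_, fun hsub => main fun s t hs ht hst => hsub ?_⟩
  · rintro p ⟨ν, hν, rfl⟩
    exact ⟨_, sum_prodMeasure ν hν, rfl⟩
  · refine ⟨s • μ₁ + t • μ₂, ⟨fun σ => ?_, ?_⟩, ?_⟩
    · exact add_nonneg (mul_nonneg hs (hp₁.1 σ)) (mul_nonneg ht (hp₂.1 σ))
    · simp only [Pi.add_apply, Pi.smul_apply, smul_eq_mul, Finset.sum_add_distrib,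
        ← Finset.mul_sum, hp₁.2, hp₂.2]
      linarith
    · funext x
      simp only [Pi.add_apply, Pi.smul_apply, smul_eq_mul, hμ₁, hμ₂, F_pm hm₁, F_pm hm₂]
      have hden : ∑ b, Gfun (Bmat β A) (s • μ₁ + t • μ₂) b = 1 + m := by
        simp only [G_mix, hμ₁, hμ₂, G_pm]
        rw [Fin.sum_univ_succ]
        simp only [Bmat_0s, Bmat_ss, Finset.sum_add_distrib, ← Finset.mul_sum, hm₁, hm₂, one_pow]
        linear_combination (1 + m) * hst
      rw [hμ₁, hμ₂] at hden
      unfold Ffun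
      rw [hden, G_mix, G_pm, G_pm]
      ring
end

section
/- Fix integers q ≥ 2 and d ≥ 2 and a symmetric interaction matrix A ∈ ℝ_{≥0}^{q×q} such that Σ_{c∈[q]} Π_{i=1}^d A_{c,τ(i)} > 0 for every τ ∈ [q]^d. Then the set 𝓕_{A,d} := { F_{A,d}(μ) : μ an arbitrary probability measure on [q]^d } is a convex polytope, and 𝓕_{A,d} = conv( 𝓕^{prod}_{A,d} ) = conv{ F_{A,d}(δ_τ) : τ ∈ [q]^d }, where 𝓕^{prod}_{A,d} := { F_{A,d}(ν) : ν a product probability measure on [q]^d } and δ_τ is the point mass at the configuration τ. -/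
open scoped BigOperators Classical
open MeasureTheory

theorem aux_G {q d : ℕ} (A : Matrix (Fin q) (Fin q) ℝ) (μ : (Fin d → Fin q) → ℝ) :
    ∑ b, Gfun A μ b = ∑ σ : Fin d → Fin q, μ σ * ∑ c, ∏ i, A c (σ i) := by
  unfold Gfun
  rw [Finset.sum_comm]
  simp only [Finset.mul_sum]

theorem aux_delta {q d : ℕ} (A : Matrix (Fin q) (Fin q) ℝ) (τ : Fin d → Fin q) (c : Fin q) :
    Ffun A (fun σ => if σ = τ then 1 else 0) c
      = (∏ i, A c (τ i)) / ∑ c, ∏ i, A c (τ i) := by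
  unfold Ffun
  rw [aux_G]
  simp [Gfun]

theorem aux_sum_pos {ι : Type*} [Fintype ι] (w z : ι → ℝ) (hw : IsProbDist w)
    (hz : ∀ x, 0 < z x) : 0 < ∑ x, w x * z x := by
  have h0 : ∀ x ∈ Finset.univ, 0 ≤ w x * z x := fun x _ => mul_nonneg (hw.1 x) (hz x).le
  rcases (Finset.sum_nonneg h0).lt_or_eq with h | h
  · exact h
  · exfalso
    have h1 := (Finset.sum_eq_zero_iff_of_nonneg h0).1 h.symm
    have h2 : ∑ x, w x = 0 := Finset.sum_eq_zero fun x hx => by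
      rcases mul_eq_zero.1 (h1 x hx) with h | h
      · exact h
      · exact absurd h (hz x).ne'
    rw [hw.2] at h2
    exact one_ne_zero h2

theorem aux_S {q d : ℕ} (A : Matrix (Fin q) (Fin q) ℝ)
    (hpos : ∀ τ : Fin d → Fin q, 0 < ∑ c, ∏ i, A c (τ i)) :
    {p : Fin q → ℝ | ∃ μ : (Fin d → Fin q) → ℝ, IsProbDist μ ∧ p = Ffun A μ} =
    {p : Fin q → ℝ | ∃ w : (Fin d → Fin q) → ℝ, IsProbDist w ∧
      p = ∑ τ, w τ • Ffun A (fun σ => if σ = τ then 1 else 0)} := by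
  ext p
  constructor
  · rintro ⟨μ, hμ, rfl⟩
    have hZ := aux_sum_pos μ _ hμ hpos
    refine ⟨fun τ => μ τ * (∑ c, ∏ i, A c (τ i)) / ∑ σ, μ σ * ∑ c, ∏ i, A c (σ i),
      ⟨fun τ => div_nonneg (mul_nonneg (hμ.1 τ) (hpos τ).le) hZ.le, ?_⟩, ?_⟩
    · rw [← Finset.sum_div, div_self hZ.ne']
    · ext c
      simp only [Finset.sum_apply, Pi.smul_apply, smul_eq_mul, aux_delta]
      rw [Ffun, aux_G, Gfun, Finset.sum_div]
      refine Finset.sum_congr rfl fun τ _ => ?_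
      have := (hpos τ).ne'
      field_simp
  · rintro ⟨w, hw, rfl⟩
    have hZ := aux_sum_pos w (fun τ => (∑ c, ∏ i, A c (τ i))⁻¹) hw
      (fun τ => inv_pos.2 (hpos τ))
    set Z := ∑ τ, w τ * (∑ c, ∏ i, A c (τ i))⁻¹ with hZd
    refine ⟨fun τ => w τ * (∑ c, ∏ i, A c (τ i))⁻¹ / Z,
      ⟨fun τ => div_nonneg (mul_nonneg (hw.1 τ) (inv_pos.2 (hpos τ)).le) hZ.le, ?_⟩, ?_⟩
    · rw [← Finset.sum_div, ← hZd, div_self hZ.ne']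
    · ext c
      simp only [Finset.sum_apply, Pi.smul_apply, smul_eq_mul, aux_delta]
      rw [Ffun, aux_G, Gfun]
      have h1 : ∑ σ : Fin d → Fin q, w σ * (∑ c, ∏ i, A c (σ i))⁻¹ / Z *
          ∑ c, ∏ i, A c (σ i) = Z⁻¹ := by
        rw [← one_mul Z⁻¹, ← hw.2, Finset.sum_mul]
        refine Finset.sum_congr rfl fun τ _ => ?_
        have := (hpos τ).ne'
        field_simp
      rw [h1, Finset.sum_div]
      refine Finset.sum_congr rfl fun τ _ => ?_
      have := (hpos τ).ne'
      have := hZ.ne'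
      field_simp

theorem aux_pm {q d : ℕ} (τ : Fin d → Fin q) :
    (fun σ => if σ = τ then (1:ℝ) else 0) = prodMeasure (fun i => pointMass (τ i)) := by
  ext σ
  unfold prodMeasure pointMass
  split_ifs with h
  · subst h; simp
  · obtain ⟨i, hi⟩ := Function.ne_iff.1 h
    exact (Finset.prod_eq_zero (Finset.mem_univ i) (by simp [hi])).symm

/-- Lemma: `𝓕_{A,d}` is a convex polytope and is the convex hull of
`𝓕^{prod}_{A,d}`, as well as of the finitely many points `F_{A,d}(δ_τ)`. -/
theorem stmt5 (q d : ℕ) (hq : 2 ≤ q) (hd : 2 ≤ d)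
    (A : Matrix (Fin q) (Fin q) ℝ) (hsymm : A.IsSymm) (hnn : ∀ c b, 0 ≤ A c b)
    (hpos : ∀ τ : Fin d → Fin q, 0 < ∑ c, ∏ i, A c (τ i)) :
    Convex ℝ {p : Fin q → ℝ | ∃ μ : (Fin d → Fin q) → ℝ,
        IsProbDist μ ∧ p = Ffun A μ} ∧
    {p : Fin q → ℝ | ∃ μ : (Fin d → Fin q) → ℝ, IsProbDist μ ∧ p = Ffun A μ} =
      convexHull ℝ {p : Fin q → ℝ | ∃ ν : Fin d → Fin q → ℝ,
        (∀ i, IsProbDist (ν i)) ∧ p = Ffun A (prodMeasure ν)} ∧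
    {p : Fin q → ℝ | ∃ μ : (Fin d → Fin q) → ℝ, IsProbDist μ ∧ p = Ffun A μ} =
      convexHull ℝ {p : Fin q → ℝ | ∃ τ : Fin d → Fin q,
        p = Ffun A (fun σ => if σ = τ then 1 else 0)} := by
  have hS := aux_S A hpos
  have hconv : Convex ℝ {p : Fin q → ℝ | ∃ μ : (Fin d → Fin q) → ℝ,
        IsProbDist μ ∧ p = Ffun A μ} := by
    rw [hS]
    rintro _ ⟨w, hw, rfl⟩ _ ⟨w', hw', rfl⟩ a b ha hb hab
    refine ⟨fun τ => a * w τ + b * w' τ, ⟨fun τ => ?_, ?_⟩, ?_⟩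
    · exact add_nonneg (mul_nonneg ha (hw.1 τ)) (mul_nonneg hb (hw'.1 τ))
    · rw [Finset.sum_add_distrib, ← Finset.mul_sum, ← Finset.mul_sum, hw.2, hw'.2]
      linarith
    · simp only [add_smul, mul_smul, Finset.sum_add_distrib, Finset.smul_sum]
  have hsub : {p : Fin q → ℝ | ∃ τ : Fin d → Fin q,
        p = Ffun A (fun σ => if σ = τ then 1 else 0)} ⊆
      {p : Fin q → ℝ | ∃ ν : Fin d → Fin q → ℝ,
        (∀ i, IsProbDist (ν i)) ∧ p = Ffun A (prodMeasure ν)} := by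
    rintro _ ⟨τ, rfl⟩
    refine ⟨fun i => pointMass (τ i), fun i => ⟨fun x => ?_, ?_⟩, ?_⟩
    · simp only [pointMass]; split_ifs <;> norm_num
    · simp [pointMass]
    · rw [aux_pm]
  have hprod : {p : Fin q → ℝ | ∃ ν : Fin d → Fin q → ℝ,
        (∀ i, IsProbDist (ν i)) ∧ p = Ffun A (prodMeasure ν)} ⊆
      {p : Fin q → ℝ | ∃ μ : (Fin d → Fin q) → ℝ, IsProbDist μ ∧ p = Ffun A μ} := by
    rintro _ ⟨ν, hν, rfl⟩
    refine ⟨prodMeasure ν, ⟨fun σ => Finset.prod_nonneg fun i _ => (hν i).1 _, ?_⟩, rfl⟩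
    unfold prodMeasure
    rw [← Fintype.prod_sum]
    exact Finset.prod_eq_one fun i _ => (hν i).2
  have hle : {p : Fin q → ℝ | ∃ μ : (Fin d → Fin q) → ℝ, IsProbDist μ ∧ p = Ffun A μ} ⊆
      convexHull ℝ {p : Fin q → ℝ | ∃ τ : Fin d → Fin q,
        p = Ffun A (fun σ => if σ = τ then 1 else 0)} := by
    rw [hS]
    rintro _ ⟨w, hw, rfl⟩
    exact (convex_convexHull ℝ _).sum_mem (fun τ _ => hw.1 τ) hw.2
      (fun τ _ => subset_convexHull ℝ _ ⟨τ, rfl⟩)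
  exact ⟨hconv, (hle.trans (convexHull_mono hsub)).antisymm (convexHull_min hprod hconv),
    hle.antisymm (convexHull_min (hsub.trans hprod) hconv)⟩
end

section
/- Fix an integer q ≥ 2 and an integer d ≥ 2q. Let A = 1_q 1_q^T − (1−β) I_q be the antiferromagnetic Potts interaction matrix with max{0, 1 − q/(d+1)} ≤ β ≤ 1. Let 0 < ε ≤ 1/4 and set γ* := min{ 1 − √β + ε, 1/10 }. If μ is any probability distribution on [q]^d satisfying, for every color c ∈ [q], the lower tail bound Pr_{τ∼μ}[ #{i ∈ [d] : τ(i) = c} ≤ γ* · d/q ] ≤ ε, then there exists a product probability measure ν on [q]^d such that F_{A,d}(μ) = F_{A,d}(ν). -/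
open scoped BigOperators Classical
open MeasureTheory

/-- The antiferromagnetic Potts interaction matrix `A = 1 1ᵀ - (1-β) I`:
diagonal entries `β`, off-diagonal entries `1`. -/
noncomputable def pottsA (q : ℕ) (β : ℝ) : Matrix (Fin q) (Fin q) ℝ :=
  Matrix.of fun c b => if c = b then β else 1

lemma aux_log_lower (y : ℝ) (h0 : 0 ≤ y) (h1 : y < 1) : y + y^2/2 ≤ -Real.log (1 - y) := by
  have h := Real.hasSum_pow_div_log_of_abs_lt_one (x := y) (by rw [abs_of_nonneg h0]; exact h1)
  have h2 := sum_le_hasSum (Finset.range 2) (fun i _ => by positivity) h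
  simp [Finset.sum_range_succ] at h2
  norm_num at h2
  linarith

lemma aux_log_upper (x : ℝ) (h0 : 0 ≤ x) (h1 : x ≤ 1/2) :
    -Real.log (1 - x) ≤ x + x^2/2 + 7/12 * x^3 := by
  have h := Real.abs_log_sub_add_sum_range_le (x := x) (by rw [abs_of_nonneg h0]; linarith) 8
  rw [abs_of_nonneg h0] at h
  have h3 := (abs_le.1 h).1
  simp [Finset.sum_range_succ] at h3
  norm_num at h3
  have h4 : x^9/(1-x) ≤ 2 * x^9 := by
    rw [div_le_iff₀ (by linarith)]
    nlinarith [pow_nonneg h0 9]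
  have hs : ∀ k : ℕ, x^(k+1) ≤ 1/2 * x^k := fun k => by
    rw [pow_succ]; nlinarith [pow_nonneg h0 k]
  have a3 := hs 3
  have a4 := hs 4
  have a5 := hs 5
  have a6 := hs 6
  have a7 := hs 7
  have a8 := hs 8
  norm_num at a3 a4 a5 a6 a7 a8
  have b3 := pow_nonneg h0 3
  linarith

lemma aux_main (n d x g : ℝ) (hn : 1 ≤ n) (hx0 : 0 < x) (hx : x ≤ 1/2) (hd : 0 < d)
    (hdx : x * (d + 1) ≤ n + 1) (hg0 : 0 < g) (hg : g ≤ 1 - 3/4 * x) :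
    (n - x) * g ^ (1/d) ≤ n * Real.exp (Real.log (1 - x) / n) := by
  have hn0 : 0 < n := by linarith
  have hxn : x / n ≤ 1/2 := by rw [div_le_iff₀ hn0]; linarith
  have hlg : Real.log g ≤ - (3/4*x + (3/4*x)^2/2) := by
    have := aux_log_lower (3/4*x) (by positivity) (by linarith)
    have := Real.log_le_log hg0 hg
    linarith
  have hln := aux_log_lower (x/n) (by positivity) (by linarith)
  have hL := aux_log_upper x hx0.le hx
  have hd1 : x / (n + 1) ≤ 1 / d := by
    rw [div_le_div_iff₀ (by linarith) hd]; nlinarith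
  have key : Real.log (1 - x/n) + Real.log g * (1/d) ≤ Real.log (1-x) / n := by
    have e1 : Real.log g * (1/d) ≤ - (3/4*x + (3/4*x)^2/2) * (x/(n+1)) := by
      have p : 0 ≤ 3/4*x + (3/4*x)^2/2 := by positivity
      have p2 : 0 ≤ 1/d := by positivity
      nlinarith
    have e2 : -(x + x^2/2 + 7/12 * x^3)/n ≤ Real.log (1-x)/n := by
      gcongr; linarith
    have e3 : -(x/n + (x/n)^2/2) - (3/4*x + (3/4*x)^2/2) * (x/(n+1))
        ≤ -(x + x^2/2 + 7/12 * x^3)/n := by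
      have : -(x + x^2/2 + 7/12 * x^3)/n -
          (-(x/n + (x/n)^2/2) - (3/4*x + (3/4*x)^2/2) * (x/(n+1)))
          = x^2 / (n^2*(n+1)) * (n^2 * (3/4 + 9/32*x) + (n+1)/2 - (1/2 + 7/12*x)*n*(n+1)) := by
        field_simp
        ring
      have q : 0 ≤ n^2 * (3/4 + 9/32*x) + (n+1)/2 - (1/2 + 7/12*x)*n*(n+1) := by
        have : 0 ≤ (1/2 - x) * n^2 := by apply mul_nonneg; linarith; positivity
        have : 0 ≤ (1/2 - x) * n := by apply mul_nonneg; linarith; positivity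
        nlinarith [sq_nonneg (n - 3/2)]
      have : 0 ≤ x^2 / (n^2*(n+1)) * (n^2 * (3/4 + 9/32*x) + (n+1)/2 - (1/2 + 7/12*x)*n*(n+1)) :=
        mul_nonneg (by positivity) q
      linarith
    linarith
  have : (n - x) * g ^ (1/d) = n * Real.exp (Real.log (1 - x/n) + Real.log g * (1/d)) := by
    rw [Real.exp_add, Real.exp_log (by linarith), Real.rpow_def_of_pos hg0]
    field_simp
  rw [this]
  gcongr

lemma prod_potts {q d : ℕ} (β : ℝ) (c : Fin q) (σ : Fin d → Fin q) :
    ∏ i, pottsA q β c (σ i) = β ^ (Finset.univ.filter (fun i => σ i = c)).card := by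
  simp only [pottsA, Matrix.of_apply, Finset.prod_ite, Finset.prod_const, one_pow, mul_one]
  simp only [eq_comm]

lemma sum_card {q d : ℕ} (σ : Fin d → Fin q) :
    ∑ c, ((Finset.univ.filter (fun i => σ i = c)).card : ℝ) = d := by
  rw [← Nat.cast_sum, ← Finset.card_eq_sum_card_fiberwise (f := σ) (t := Finset.univ)]
  · simp
  · intro x _; simp

lemma Gfun_prod {q d : ℕ} (A : Matrix (Fin q) (Fin q) ℝ) (ν : Fin d → Fin q → ℝ) (c : Fin q) :
    Gfun A (prodMeasure ν) c = ∏ i, ∑ b, ν i b * A c b := by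
  rw [Finset.prod_univ_sum]
  simp [Gfun, prodMeasure, Finset.prod_mul_distrib]

lemma sum_potts {q : ℕ} (β : ℝ) (p : Fin q → ℝ) (hp : ∑ b, p b = 1) (c : Fin q) :
    ∑ b, p b * pottsA q β c b = 1 - (1 - β) * p c := by
  have : ∀ b, p b * pottsA q β c b = p b - if c = b then (1-β) * p b else 0 := by
    intro b
    simp only [pottsA, Matrix.of_apply]
    split_ifs <;> ring
  simp [this, hp]

lemma G_lower {q d : ℕ} (β : ℝ) (hβ : 0 < β) (μ : (Fin d → Fin q) → ℝ) (hμ : IsProbDist μ)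
    (c : Fin q) :
    Real.exp (Real.log β * ∑ σ, μ σ * ((Finset.univ.filter (fun i => σ i = c)).card : ℝ))
      ≤ Gfun (pottsA q β) μ c := by
  have h := convexOn_exp.map_sum_le (t := Finset.univ) (w := μ)
    (p := fun σ => Real.log β * ((Finset.univ.filter (fun i => σ i = c)).card : ℝ))
    (fun i _ => hμ.1 i) hμ.2 (fun i _ => Set.mem_univ _)
  simp only [smul_eq_mul] at h
  have e1 : Real.log β * ∑ σ, μ σ * ((Finset.univ.filter (fun i => σ i = c)).card : ℝ)
     = ∑ σ, μ σ * (Real.log β * ((Finset.univ.filter (fun i => σ i = c)).card : ℝ)) := by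
    rw [Finset.mul_sum]; exact Finset.sum_congr rfl fun _ _ => by ring
  rw [e1]
  refine h.trans (le_of_eq ?_)
  unfold Gfun
  refine Finset.sum_congr rfl fun σ _ => ?_
  rw [prod_potts, mul_comm (Real.log β), Real.exp_nat_mul, Real.exp_log hβ]

lemma G_upper {q d : ℕ} (β ε t : ℝ) (hβ : 0 < β) (hβ1 : β ≤ 1) (ht : 0 ≤ t)
    (μ : (Fin d → Fin q) → ℝ) (hμ : IsProbDist μ) (c : Fin q)
    (h : (∑ τ : Fin d → Fin q,
        if ((Finset.univ.filter (fun i => τ i = c)).card : ℝ) ≤ t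
        then μ τ else 0) ≤ ε) :
    Gfun (pottsA q β) μ c ≤ β + (1 - β) * ε := by
  have : Gfun (pottsA q β) μ c ≤ ∑ τ, (μ τ * β + (1 - β) *
      if ((Finset.univ.filter (fun i => τ i = c)).card : ℝ) ≤ t then μ τ else 0) := by
    unfold Gfun
    refine Finset.sum_le_sum fun σ _ => ?_
    rw [prod_potts]
    have hm := hμ.1 σ
    split_ifs with hc
    · have := pow_le_one₀ hβ.le hβ1 (n := (Finset.univ.filter (fun i => σ i = c)).card)
      nlinarith
    · have h1 : (Finset.univ.filter (fun i => σ i = c)).card ≠ 0 := by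
        intro h0
        rw [h0] at hc
        exact hc (by simpa using ht)
      have := pow_le_of_le_one hβ.le hβ1 h1
      nlinarith
  refine this.trans ?_
  rw [Finset.sum_add_distrib, ← Finset.sum_mul, hμ.2, ← Finset.mul_sum]
  have : 0 ≤ 1 - β := by linarith
  nlinarith

lemma jensen_exp {ι : Type*} (s : Finset ι) (y : ι → ℝ) (T : ℝ) (hs : 0 < s.card)
    (hT : T ≤ ∑ i ∈ s, y i) :
    (s.card : ℝ) * Real.exp (T / s.card) ≤ ∑ i ∈ s, Real.exp (y i) := by
  have hc : (0:ℝ) < s.card := by exact_mod_cast hs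
  have h := convexOn_exp.map_sum_le (t := s) (w := fun _ => (s.card : ℝ)⁻¹)
    (p := y) (fun i _ => by positivity) (by simp [hc.ne']) (fun i _ => Set.mem_univ _)
  simp only [smul_eq_mul, ← Finset.mul_sum] at h
  have h2 : Real.exp (T / s.card) ≤ Real.exp ((s.card : ℝ)⁻¹ * ∑ i ∈ s, y i) := by
    rw [div_eq_inv_mul]; gcongr
  have := h2.trans h
  rwa [inv_mul_eq_div, le_div_iff₀ hc, mul_comm] at this

/-- Theorem: large convex bulk for the antiferromagnetic Potts model.
For `q ≥ 2`, `d ≥ 2q`, `max{0, 1 - q/(d+1)} ≤ β ≤ 1`, `0 < ε ≤ 1/4` and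
`γ* = min{1 - √β + ε, 1/10}`: if `μ` is a probability distribution on `[q]^d`
such that for every color `c`,
`Pr_{τ∼μ}[#{i : τ i = c} ≤ γ*·d/q] ≤ ε`, then there is a product probability
measure `ν` on `[q]^d` with `F_A(μ) = F_A(ν)`. -/
theorem stmt6 (q d : ℕ) (hq : 2 ≤ q) (hd : 2 * q ≤ d) (β ε : ℝ)
    (hβlo : max 0 (1 - (q:ℝ) / ((d:ℝ) + 1)) ≤ β) (hβhi : β ≤ 1)
    (hε0 : 0 < ε) (hε : ε ≤ 1/4)
    (μ : (Fin d → Fin q) → ℝ) (hμ : IsProbDist μ)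
    (htail : ∀ c : Fin q,
      (∑ τ : Fin d → Fin q,
        if ((Finset.univ.filter (fun i => τ i = c)).card : ℝ) ≤
            min (1 - Real.sqrt β + ε) (1/10) * (d:ℝ) / (q:ℝ)
        then μ τ else 0) ≤ ε) :
    ∃ ν : Fin d → Fin q → ℝ, (∀ i, IsProbDist (ν i)) ∧
      ∀ c, Ffun (pottsA q β) μ c = Ffun (pottsA q β) (prodMeasure ν) c := by
  have hq0 : (2:ℝ) ≤ q := by exact_mod_cast hq
  have hd0 : 2 * (q:ℝ) ≤ d := by exact_mod_cast hd
  have hβ2 := (le_max_right _ _).trans hβlo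
  have hx1 : (1 - β) * ((d:ℝ) + 1) ≤ q := by
    have : 1 - β ≤ (q:ℝ)/((d:ℝ)+1) := by linarith
    rwa [le_div_iff₀ (by linarith)] at this
  have hxhalf : 1 - β ≤ 1/2 := by
    by_contra hcon
    push Not at hcon
    nlinarith
  have hβ0 : 0 < β := by linarith
  have hdpos : (0:ℝ) < d := by linarith
  have hdn : d ≠ 0 := by omega
  rcases eq_or_lt_of_le hβhi with hβ1 | hβ1
  · subst hβ1
    refine ⟨fun _ _ => 1 / q, fun i => ⟨fun _ => by positivity, ?_⟩, fun c => ?_⟩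
    · simp; field_simp
    · have h1 : ∀ c, Gfun (pottsA q 1) μ c = 1 := by
        intro c
        unfold Gfun
        simp only [prod_potts, one_pow, mul_one]
        exact hμ.2
      have h2 : ∀ c, Gfun (pottsA q 1) (prodMeasure (fun (_ : Fin d) (_ : Fin q) => 1 / (q:ℝ))) c = 1 := by
        intro c
        rw [Gfun_prod]
        refine Finset.prod_eq_one fun i _ => ?_
        rw [sum_potts]
        · ring
        · simp; field_simp
      simp only [Ffun, h1, h2]
  set g : Fin q → ℝ := fun c => Gfun (pottsA q β) μ c with hg
  set M : Fin q → ℝ := fun c => ∑ σ, μ σ * ((Finset.univ.filter (fun i => σ i = c)).card : ℝ) with hM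
  have hx0 : 0 < 1 - β := by linarith
  have hglow : ∀ c, Real.exp (Real.log β * M c) ≤ g c := fun c => G_lower β hβ0 μ hμ c
  have hgpos : ∀ c, 0 < g c := fun c => (Real.exp_pos _).trans_le (hglow c)
  have hgup : ∀ c, g c ≤ 1 - 3/4 * (1 - β) := by
    intro c
    have hs : Real.sqrt β ≤ 1 := Real.sqrt_le_one.2 hβhi
    have ht : 0 ≤ min (1 - Real.sqrt β + ε) (1/10) * (d:ℝ) / (q:ℝ) := by
      have : 0 ≤ min (1 - Real.sqrt β + ε) (1/10) := le_min (by linarith) (by norm_num)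
      positivity
    have := G_upper β ε _ hβ0 hβhi ht μ hμ c (htail c)
    have h3 : g c ≤ β + (1 - β) * ε := this
    nlinarith
  have hMsum : ∑ c, M c = d := by
    simp only [hM]
    rw [Finset.sum_comm]
    simp only [← Finset.mul_sum, sum_card, ← Finset.sum_mul, hμ.2, one_mul]
  have hMnn : ∀ c, 0 ≤ M c := fun c =>
    Finset.sum_nonneg fun σ _ => mul_nonneg (hμ.1 σ) (Nat.cast_nonneg _)
  have hlogβ : Real.log β < 0 := Real.log_neg hβ0 hβ1
  set h : Fin q → ℝ := fun c => g c ^ (1/(d:ℝ)) with hh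
  have hhpos : ∀ c, 0 < h c := fun c => Real.rpow_pos_of_pos (hgpos c) _
  have hhd : ∀ c, h c ^ d = g c := by
    intro c
    simp only [hh]
    rw [← Real.rpow_natCast, ← Real.rpow_mul (hgpos c).le, one_div, inv_mul_cancel₀ hdpos.ne',
      Real.rpow_one]
  have hhlow : ∀ c, Real.exp (Real.log β * M c / d) ≤ h c := by
    intro c
    have := Real.rpow_le_rpow (Real.exp_pos _).le (hglow c) (by positivity : (0:ℝ) ≤ 1/(d:ℝ))
    rwa [← Real.exp_mul, mul_one_div] at this
  set S : ℝ := ∑ b, h b with hS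
  have hmain : ∀ c, (q - (1 - β)) * h c ≤ S := by
    intro c
    have hcard : (Finset.univ.erase c).card = q - 1 := by simp
    have hcardR : ((Finset.univ.erase c).card : ℝ) = q - 1 := by
      rw [hcard, Nat.cast_sub (by omega)]; simp
    have h1 := jensen_exp (Finset.univ.erase c) (fun b => Real.log β * M b / d) (Real.log β)
      (by omega) (by
        rw [← Finset.sum_div, ← Finset.mul_sum, le_div_iff₀ hdpos]
        have : ∑ b ∈ Finset.univ.erase c, M b ≤ d := by
          rw [← hMsum]
          exact Finset.sum_le_sum_of_subset_of_nonneg (Finset.subset_univ _) fun i _ _ => hMnn i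
        nlinarith)
    have h2 := Finset.sum_le_sum (s := Finset.univ.erase c) (fun b _ => hhlow b)
    rw [hcardR] at h1
    have h3 := aux_main ((q:ℝ)-1) d (1-β) (g c) (by linarith) hx0 hxhalf hdpos (by linarith)
      (hgpos c) (hgup c)
    rw [sub_sub_cancel] at h3
    have h4 : S = h c + ∑ b ∈ Finset.univ.erase c, h b :=
      (Finset.add_sum_erase _ _ (Finset.mem_univ c)).symm
    have h5 : ((q:ℝ) - 1 - (1-β)) * h c ≤ ∑ b ∈ Finset.univ.erase c, h b := h3.trans (h1.trans h2)
    rw [h4]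
    linarith
  have hqx : 0 < (q:ℝ) - (1 - β) := by linarith
  have hSpos : 0 < S := by
    have c0 : Fin q := ⟨0, by omega⟩
    exact (mul_pos hqx (hhpos c0)).trans_le (hmain c0)
  set t : ℝ := (q - (1 - β)) / S with ht
  have htpos : 0 < t := div_pos hqx hSpos
  set p : Fin q → ℝ := fun c => (1 - t * h c) / (1 - β) with hp
  have hpsum : ∑ c, p c = 1 := by
    simp only [hp]
    rw [← Finset.sum_div, Finset.sum_sub_distrib, ← Finset.mul_sum, ← hS, ht,
      div_mul_cancel₀ _ hSpos.ne']
    simp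
    field_simp
    exact hx0.ne'
  have hGν : ∀ c, Gfun (pottsA q β) (prodMeasure (fun _ : Fin d => p)) c = t ^ d * g c := by
    intro c
    rw [Gfun_prod]
    simp only [sum_potts β p hpsum, Finset.prod_const, Finset.card_univ, Fintype.card_fin]
    rw [← hhd c, ← mul_pow]
    congr 1
    simp only [hp]
    field_simp
    ring
  refine ⟨fun _ => p, fun _ => ⟨fun c => div_nonneg ?_ hx0.le, hpsum⟩, fun c => ?_⟩
  · have := hmain c
    rw [ht, div_mul_eq_mul_div, sub_nonneg, div_le_one hSpos]
    exact this
  · simp only [Ffun, hGν, ← Finset.mul_sum]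
    rw [mul_div_mul_left _ _ (pow_pos htpos d).ne']
end

section
/- Fix integers q ≥ 2 and d ≥ 1, a real 0 < β ≤ 1, and a color c* ∈ [q]. Let ξ be any probability distribution on the slice {α ∈ ℤ_{≥0}^q : Σ_{c∈[q]} α(c) = d}. Then (1/(q−1)) · Σ_{c ∈ [q], c ≠ c*} E_{α∼ξ}[ β^{α(c)} ]^{1/d} ≥ β^{1/(q−1)} · E_{α∼ξ}[ β^{ −(1/(q−1)) · α(c*)/d } ]. -/
open scoped BigOperators Classical
open MeasureTheory

/-- Jensen-type inequality used in the proof of the convex-bulk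
theorem. For `q ≥ 2`, `d ≥ 1`, `0 < β ≤ 1`, a color `c*` and any probability
distribution `ξ` on the slice `{α ∈ ℤ_{≥0}^q : ∑ c, α(c) = d}` (encoded as
functions `Fin q → Fin (d+1)` with `ξ` vanishing off the slice):
`(1/(q-1)) ∑_{c ≠ c*} E_{α∼ξ}[β^{α(c)}]^{1/d}
  ≥ β^{1/(q-1)} · E_{α∼ξ}[β^{-(1/(q-1))·α(c*)/d}]`. -/
theorem stmt8 (q d : ℕ) (hq : 2 ≤ q) (hd : 1 ≤ d) (β : ℝ)
    (hβ0 : 0 < β) (hβ1 : β ≤ 1) (cstar : Fin q)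
    (ξ : (Fin q → Fin (d+1)) → ℝ)
    (hξ0 : ∀ α, 0 ≤ ξ α) (hξ1 : ∑ α, ξ α = 1)
    (hξs : ∀ α, ξ α ≠ 0 → ∑ c, (α c : ℕ) = d) :
    β ^ ((1:ℝ) / ((q:ℝ) - 1)) *
        (∑ α, ξ α * β ^ (-(1 / ((q:ℝ) - 1)) * ((α cstar : ℕ) : ℝ) / (d:ℝ))) ≤
      (1 / ((q:ℝ) - 1)) *
        ∑ c ∈ Finset.univ.erase cstar,
          (∑ α, ξ α * β ^ ((α c : ℕ))) ^ ((1:ℝ) / (d:ℝ)) := by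
  have hd0 : (0:ℝ) < d := by exact_mod_cast hd
  have hq0 : (0:ℝ) < (q:ℝ) - 1 := by
    have : (2:ℝ) ≤ q := by exact_mod_cast hq
    linarith
  have hcard : ((Finset.univ.erase cstar : Finset (Fin q)).card : ℝ) = (q:ℝ) - 1 := by
    rw [Finset.card_erase_of_mem (Finset.mem_univ _), Finset.card_univ, Fintype.card_fin,
      Nat.cast_sub (by omega)]
    simp
  have h1 : ∀ c, ∑ α, ξ α * β ^ (((α c : ℕ) : ℝ) / (d:ℝ)) ≤
      (∑ α, ξ α * β ^ ((α c : ℕ))) ^ ((1:ℝ) / (d:ℝ)) := by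
    intro c
    have h := Real.pow_arith_mean_le_arith_mean_pow Finset.univ ξ
      (fun α => β ^ (((α c : ℕ) : ℝ) / (d:ℝ))) (fun i _ => hξ0 i) hξ1
      (fun i _ => (Real.rpow_pos_of_pos hβ0 _).le) d
    have h0 : 0 ≤ ∑ α, ξ α * β ^ (((α c : ℕ) : ℝ) / (d:ℝ)) :=
      Finset.sum_nonneg fun i _ => mul_nonneg (hξ0 i) (Real.rpow_pos_of_pos hβ0 _).le
    have he : ∀ α : Fin q → Fin (d+1),
        (β ^ (((α c : ℕ) : ℝ) / (d:ℝ))) ^ d = β ^ (α c : ℕ) := by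
      intro α
      rw [← Real.rpow_natCast, ← Real.rpow_mul hβ0.le, div_mul_cancel₀ _ hd0.ne',
        Real.rpow_natCast]
    simp only [he] at h
    have h2 := Real.rpow_le_rpow (pow_nonneg h0 d) h (by positivity : (0:ℝ) ≤ 1 / (d:ℝ))
    rwa [← Real.rpow_natCast, ← Real.rpow_mul h0, mul_one_div_cancel hd0.ne',
      Real.rpow_one] at h2
  have h2 : ∀ α, ξ α * (β ^ ((1:ℝ) / ((q:ℝ) - 1)) *
        β ^ (-(1 / ((q:ℝ) - 1)) * ((α cstar : ℕ) : ℝ) / (d:ℝ))) ≤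
      ξ α * ∑ c ∈ Finset.univ.erase cstar,
        (1 / ((q:ℝ) - 1)) * β ^ (((α c : ℕ) : ℝ) / (d:ℝ)) := by
    intro α
    by_cases hα : ξ α = 0
    · simp [hα]
    refine mul_le_mul_of_nonneg_left ?_ (hξ0 α)
    have hs := hξs α hα
    have hs' : ∑ c ∈ Finset.univ.erase cstar, ((α c : ℕ) : ℝ) = d - ((α cstar : ℕ) : ℝ) := by
      have hc : ((∑ c, (α c : ℕ) : ℕ) : ℝ) = (d:ℝ) := congrArg _ hs
      rw [← Finset.add_sum_erase _ _ (Finset.mem_univ cstar)] at hc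
      push_cast at hc
      linarith
    have h := Real.geom_mean_le_arith_mean_weighted (Finset.univ.erase cstar)
      (fun _ => 1 / ((q:ℝ) - 1)) (fun c => β ^ (((α c : ℕ) : ℝ) / (d:ℝ)))
      (fun _ _ => by positivity)
      (by rw [Finset.sum_const, nsmul_eq_mul, hcard, mul_one_div_cancel hq0.ne'])
      (fun i _ => (Real.rpow_pos_of_pos hβ0 _).le)
    refine le_trans (le_of_eq ?_) h
    simp only [← Real.rpow_mul hβ0.le]
    rw [← Real.rpow_sum_of_pos hβ0, ← Real.rpow_add hβ0, ← Finset.sum_mul, ← Finset.sum_div, hs']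
    congr 1
    field_simp
    ring
  calc _ = ∑ α, ξ α * (β ^ ((1:ℝ) / ((q:ℝ) - 1)) *
        β ^ (-(1 / ((q:ℝ) - 1)) * ((α cstar : ℕ) : ℝ) / (d:ℝ))) := by
        rw [Finset.mul_sum]
        exact Finset.sum_congr rfl fun _ _ => by ring
    _ ≤ _ := Finset.sum_le_sum fun α _ => h2 α
    _ = (1 / ((q:ℝ) - 1)) * ∑ c ∈ Finset.univ.erase cstar,
          ∑ α, ξ α * β ^ (((α c : ℕ) : ℝ) / (d:ℝ)) := by
        rw [Finset.sum_comm, Finset.mul_sum]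
        refine Finset.sum_congr rfl fun α _ => ?_
        rw [← Finset.mul_sum, ← Finset.mul_sum]
        ring
    _ ≤ _ := mul_le_mul_of_nonneg_left (Finset.sum_le_sum fun c _ => h1 c) (by positivity)
end

section
/- Fix an integer q ≥ 2 and a real β ≥ 1. Let A ∈ ℝ_{≥0}^{q×q} be any interaction matrix satisfying A ≥ 1_q 1_q^T entrywise with A ≠ 1_q 1_q^T. Then the symmetric real matrix B = B(β,A) has at least two strictly positive eigenvalues (eigenvalues of a real symmetric matrix counted with multiplicity). -/
open scoped BigOperators Classical
open MeasureTheory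

theorem quad_spec {n : ℕ} (M : Matrix (Fin n) (Fin n) ℝ) (hM : M.IsHermitian) (w : Fin n → ℝ) :
    w ⬝ᵥ (M.mulVec w) = ∑ i, hM.eigenvalues i * ((hM.eigenvectorBasis i).ofLp ⬝ᵥ w) ^ 2 := by
  have h := hM.eigenvectorBasis.sum_inner_mul_inner (WithLp.toLp 2 w) (WithLp.toLp 2 (M.mulVec w))
  have e : inner ℝ (WithLp.toLp 2 w) (WithLp.toLp 2 (M.mulVec w)) = w ⬝ᵥ (M.mulVec w) := by
    simp [EuclideanSpace.inner_eq_star_dotProduct, dotProduct_comm]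
  rw [← e, ← h]
  refine Finset.sum_congr rfl fun i _ => ?_
  have h1 : inner ℝ (WithLp.toLp 2 w) (hM.eigenvectorBasis i)
      = (hM.eigenvectorBasis i).ofLp ⬝ᵥ w := by
    simp [EuclideanSpace.inner_eq_star_dotProduct]
  have h2 : inner ℝ (hM.eigenvectorBasis i) (WithLp.toLp 2 (M.mulVec w))
      = hM.eigenvalues i * ((hM.eigenvectorBasis i).ofLp ⬝ᵥ w) := by
    have : inner ℝ (hM.eigenvectorBasis i) (WithLp.toLp 2 (M.mulVec w))
      = (hM.eigenvectorBasis i).ofLp ⬝ᵥ (M.mulVec w) := by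
      simp [EuclideanSpace.inner_eq_star_dotProduct, dotProduct_comm]
    rw [this, Matrix.dotProduct_mulVec, ← Matrix.mulVec_transpose]
    have ht : M.transpose = M := by simpa [Matrix.IsHermitian] using hM
    rw [ht, hM.mulVec_eigenvectorBasis, smul_dotProduct, smul_eq_mul]
  rw [h1, h2]; ring

theorem Bmat_quad {q : ℕ} (β : ℝ) (A : Matrix (Fin q) (Fin q) ℝ) (x y : ℝ) :
    (Fin.cons x (fun _ => y) : Fin (q+1) → ℝ) ⬝ᵥ
      ((Bmat β A).mulVec (Fin.cons x (fun _ => y) : Fin (q+1) → ℝ))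
      = β * x ^ 2 + 2 * q * x * y + (∑ i, ∑ j, A i j) * y ^ 2 := by
  simp only [dotProduct, Matrix.mulVec, Fin.sum_univ_succ, Fin.cons_zero, Fin.cons_succ, Bmat,
    Matrix.of_apply, Fin.succ_ne_zero, dif_pos, if_pos, dif_neg, if_neg, not_false_eq_true,
    Fin.pred_succ, ← Finset.mul_sum, ← Finset.sum_mul, Finset.sum_add_distrib, Finset.sum_const,
    Finset.card_univ, Fintype.card_fin, nsmul_eq_mul]
  ring

/-- Lemma: `B(β,A)` has at least two positive eigenvalues.
For `q ≥ 2`, `β ≥ 1` and `A ∈ ℝ_{≥0}^{q×q}` with `A ≥ 1 1ᵀ` entrywise and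
`A ≠ 1 1ᵀ`, the symmetric matrix `B = B(β,A)` has at least two strictly positive
eigenvalues (counted with multiplicity). -/
theorem stmt11 (q : ℕ) (hq : 2 ≤ q) (β : ℝ) (hβ : 1 ≤ β)
    (A : Matrix (Fin q) (Fin q) ℝ)
    (hge : ∀ c b, (1:ℝ) ≤ A c b) (hne : ∃ c b, A c b ≠ 1)
    (hB : (Bmat β A).IsHermitian) :
    2 ≤ (Finset.univ.filter (fun i => 0 < hB.eigenvalues i)).card := by
  by_contra hc
  have hc1 : (Finset.univ.filter (fun i => 0 < hB.eigenvalues i)).card ≤ 1 := by omega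
  obtain ⟨i0, h0⟩ := Finset.card_le_one_iff_subset_singleton.mp hc1
  have hneg : ∀ i, i ≠ i0 → hB.eigenvalues i ≤ 0 := by
    intro i hi
    by_contra hp
    exact hi (by simpa using h0 (by simpa using hp : i ∈ _))
  have hS : (q:ℝ) ^ 2 < ∑ i, ∑ j, A i j := by
    obtain ⟨c, b, hcb⟩ := hne
    have : ∑ i : Fin q, ∑ j : Fin q, (1:ℝ) < ∑ i, ∑ j, A i j := by
      refine Finset.sum_lt_sum (fun i _ => Finset.sum_le_sum fun j _ => hge i j)
        ⟨c, Finset.mem_univ _, Finset.sum_lt_sum (fun j _ => hge c j)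
          ⟨b, Finset.mem_univ _, lt_of_le_of_ne (hge c b) (Ne.symm hcb)⟩⟩
    simpa [sq] using this
  obtain ⟨x, y, hxy, horth⟩ : ∃ x y : ℝ, (x ≠ 0 ∨ y ≠ 0) ∧
      (hB.eigenvectorBasis i0).ofLp ⬝ᵥ (Fin.cons x (fun _ => y) : Fin (q+1) → ℝ) = 0 := by
    set v := (hB.eigenvectorBasis i0).ofLp
    have hd : ∀ x y : ℝ, v ⬝ᵥ (Fin.cons x (fun _ => y) : Fin (q+1) → ℝ)
        = v 0 * x + (∑ j : Fin q, v j.succ) * y := by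
      intro x y
      simp [dotProduct, Fin.sum_univ_succ, Finset.sum_mul]
    by_cases ha : v 0 = 0
    · by_cases hb : ∑ j : Fin q, v j.succ = 0
      · exact ⟨1, 0, by simp, by rw [hd, ha]; simp⟩
      · exact ⟨_, -v 0, Or.inl hb, by rw [hd]; ring⟩
    · exact ⟨∑ j : Fin q, v j.succ, -v 0, Or.inr (by simpa using ha), by rw [hd]; ring⟩
  have hq1 := quad_spec _ hB (Fin.cons x (fun _ => y) : Fin (q+1) → ℝ)
  rw [Bmat_quad] at hq1
  have hle : ∑ i, hB.eigenvalues i * ((hB.eigenvectorBasis i).ofLp ⬝ᵥ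
      (Fin.cons x (fun _ => y) : Fin (q+1) → ℝ)) ^ 2 ≤ 0 := by
    refine Finset.sum_nonpos fun i _ => ?_
    by_cases hi : i = i0
    · subst hi; rw [horth]; simp
    · exact mul_nonpos_of_nonpos_of_nonneg (hneg i hi) (sq_nonneg _)
  rw [← hq1] at hle
  have hsq := sq_nonneg (x + q * y)
  have hx : 0 ≤ (β - 1) * x ^ 2 := mul_nonneg (by linarith) (sq_nonneg _)
  by_cases hy : y = 0
  · subst hy
    have hx0 : x ≠ 0 := by simpa using hxy
    have : 0 < x ^ 2 := by positivity
    nlinarith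
  · have : 0 < (∑ i, ∑ j, A i j - (q:ℝ) ^ 2) * y ^ 2 := mul_pos (by linarith) (by positivity)
    nlinarith
end

section
/- For all integers d ≥ 2 and q ≥ 2, every real β > 1, and every integer 0 ≤ k ≤ q−1, there exists a symmetric interaction matrix A ∈ ℝ_{≥0}^{q×q} satisfying: (a) A ≥ 1_q 1_q^T entrywise with strict inequality in at least one entry; (b) |𝓜(d,A)| ≥ 2 and there exist c ∈ [q] and a₁, a₂ ∈ 𝓜(d,A) with A_{c,a₁} ≠ A_{c,a₂}; such that the symmetric real matrix B(β,A) has exactly k+2 strictly positive eigenvalues and exactly q−k−1 strictly negative eigenvalues (counted with multiplicity). -/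
open scoped BigOperators Classical
open MeasureTheory

open Matrix in
theorem form_eq_aux {n : ℕ} {B : Matrix (Fin n) (Fin n) ℝ} (hB : B.IsHermitian) :
    ∃ T : (Fin n → ℝ) →ₗ[ℝ] (Fin n → ℝ), ∀ x : Fin n → ℝ,
      x ⬝ᵥ (B *ᵥ x) = ∑ i, hB.eigenvalues i * (T x i) ^ 2 := by
  refine ⟨Matrix.mulVecLin ((hB.eigenvectorUnitary : Matrix (Fin n) (Fin n) ℝ)ᵀ), fun x => ?_⟩
  have h := hB.spectral_theorem
  rw [Unitary.conjStarAlgAut_apply] at h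
  set U : Matrix (Fin n) (Fin n) ℝ := (hB.eigenvectorUnitary : Matrix (Fin n) (Fin n) ℝ) with hU
  have hs : (star U : Matrix (Fin n) (Fin n) ℝ) = Uᵀ := by
    rw [Matrix.star_eq_conjTranspose, Matrix.conjTranspose_eq_transpose_of_trivial]
  rw [hs] at h
  conv_lhs => rw [h]
  rw [← Matrix.mulVec_mulVec, ← Matrix.mulVec_mulVec, Matrix.dotProduct_mulVec,
    ← Matrix.mulVec_transpose]
  simp only [Matrix.mulVecLin_apply, dotProduct, Matrix.mulVec_diagonal]
  refine Finset.sum_congr rfl fun i _ => ?_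
  simp
  ring

open Matrix in
theorem inertia_aux {n : ℕ} {B : Matrix (Fin n) (Fin n) ℝ} (hB : B.IsHermitian) (s : ℝ)
    {E : Type*} [AddCommGroup E] [Module ℝ E] (L : E →ₗ[ℝ] (Fin n → ℝ))
    (hL : ∀ e, e ≠ 0 → 0 < s * (L e ⬝ᵥ (B *ᵥ L e))) :
    Module.finrank ℝ E ≤ (Finset.univ.filter (fun i => 0 < s * hB.eigenvalues i)).card := by
  obtain ⟨T, hT⟩ := form_eq_aux hB
  let R : E →ₗ[ℝ] ({i // 0 < s * hB.eigenvalues i} → ℝ) :=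
    (LinearMap.funLeft ℝ ℝ Subtype.val) ∘ₗ T ∘ₗ L
  have hR : Function.Injective R := by
    rw [injective_iff_map_eq_zero]
    intro e he
    by_contra hne
    have h1 := hL e hne
    rw [hT, Finset.mul_sum] at h1
    refine absurd h1 (not_lt.2 (Finset.sum_nonpos fun i _ => ?_))
    by_cases hi : 0 < s * hB.eigenvalues i
    · have : T (L e) i = 0 := congrFun he ⟨i, hi⟩
      simp [this]
    · rw [← mul_assoc]
      exact mul_nonpos_of_nonpos_of_nonneg (not_lt.1 hi) (sq_nonneg _)
  have := LinearMap.finrank_le_finrank_of_injective hR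
  rw [Module.finrank_fintype_fun_eq_card, Fintype.card_subtype] at this
  exact this

theorem count_aux {n : ℕ} {B : Matrix (Fin n) (Fin n) ℝ} (hB : B.IsHermitian) (a b : ℕ)
    (hab : n = a + b)
    (hp : a ≤ (Finset.univ.filter (fun i => 0 < (1:ℝ) * hB.eigenvalues i)).card)
    (hn : b ≤ (Finset.univ.filter (fun i => 0 < (-1:ℝ) * hB.eigenvalues i)).card) :
    (Finset.univ.filter (fun i => 0 < hB.eigenvalues i)).card = a ∧
    (Finset.univ.filter (fun i => hB.eigenvalues i < 0)).card = b := by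
  simp only [one_mul, neg_mul, Left.neg_pos_iff] at hp hn
  have hd : Disjoint (Finset.univ.filter (fun i => 0 < hB.eigenvalues i))
      (Finset.univ.filter (fun i => hB.eigenvalues i < 0)) := by
    rw [Finset.disjoint_filter]
    intro i _ h1 h2
    exact lt_asymm h1 h2
  have h := Finset.card_le_univ (Finset.univ.filter (fun i => 0 < hB.eigenvalues i) ∪
      Finset.univ.filter (fun i => hB.eigenvalues i < 0))
  rw [Finset.card_union_of_disjoint hd, Fintype.card_fin] at h
  omega

/-- The construction. -/
noncomputable def Aof {q : ℕ} (u : Fin q → ℝ) : Matrix (Fin q) (Fin q) ℝ :=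
  Matrix.of fun i j => 1 + (u i * u j + if i = j then 1 - 2 * u i else 0)

theorem Aof_symm {q : ℕ} (u : Fin q → ℝ) : (Aof u).IsSymm := by
  ext i j
  simp only [Aof, Matrix.transpose_apply, Matrix.of_apply]
  by_cases h : i = j
  · subst h; simp
  · simp [h, Ne.symm h, mul_comm]

theorem Bmat_herm {q : ℕ} (β : ℝ) (A : Matrix (Fin q) (Fin q) ℝ) (hA : A.IsSymm) :
    (Bmat β A).IsHermitian := by
  ext i j
  rw [Matrix.conjTranspose_apply]
  simp only [Bmat, Matrix.of_apply, star_trivial]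
  split_ifs <;> first | rfl | exact hA.apply _ _

open Matrix in
theorem Bmat_form {q : ℕ} (β : ℝ) (u : Fin q → ℝ) (x : Fin (q+1) → ℝ) :
    x ⬝ᵥ (Bmat β (Aof u) *ᵥ x) = (β - 1) * x 0 ^ 2 + (x 0 + ∑ i : Fin q, x i.succ) ^ 2
      + (∑ i, u i * x i.succ) ^ 2 + ∑ i, (1 - 2 * u i) * x i.succ ^ 2 := by
  have h1 : ∀ i : Fin q, ∑ j : Fin q, Aof u i j * x j.succ
      = ∑ j : Fin q, x j.succ + u i * ∑ j, u j * x j.succ + (1 - 2 * u i) * x i.succ := by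
    intro i
    simp only [Aof, Matrix.of_apply, add_mul, Finset.sum_add_distrib, ite_mul, zero_mul,
      Finset.sum_ite_eq, Finset.mem_univ, if_true, one_mul, Finset.mul_sum, mul_assoc]
    ring
  simp only [dotProduct, Matrix.mulVec, Fin.sum_univ_succ, Bmat, Matrix.of_apply,
    Fin.succ_ne_zero, dite_true, dite_false, if_true, if_false, Fin.pred_succ, h1, one_mul]
  have h2 : ∑ i : Fin q, x i.succ * (x 0 + (∑ j : Fin q, x j.succ +
      u i * ∑ j, u j * x j.succ + (1 - 2 * u i) * x i.succ))
      = (∑ i : Fin q, x i.succ) * (x 0 + ∑ j : Fin q, x j.succ)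
        + (∑ i, u i * x i.succ) * (∑ i, u i * x i.succ)
        + ∑ i, (1 - 2 * u i) * x i.succ ^ 2 := by
    rw [Finset.sum_mul, Finset.sum_mul, ← Finset.sum_add_distrib, ← Finset.sum_add_distrib]
    refine Finset.sum_congr rfl fun i _ => ?_
    ring
  rw [h2]
  ring

theorem case_pd (q : ℕ) (β : ℝ) (hβ : 1 < β) (x : Fin (q+1) → ℝ) (hx : x ≠ 0) :
    0 < (1:ℝ) * (x ⬝ᵥ (Matrix.mulVec (Bmat β (Aof fun _ : Fin q => 0)) x)) := by
  rw [Bmat_form, one_mul]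
  by_contra hcon
  push Not at hcon
  simp only [mul_zero, sub_zero, one_mul, zero_mul, Finset.sum_const_zero] at hcon
  have h1 : 0 ≤ (β - 1) * x 0 ^ 2 := mul_nonneg (by linarith) (sq_nonneg _)
  have h2 : 0 ≤ ∑ i : Fin q, x i.succ ^ 2 := Finset.sum_nonneg fun i _ => sq_nonneg _
  have h3 := sq_nonneg (x 0 + ∑ i : Fin q, x i.succ)
  have h4 : (β - 1) * x 0 ^ 2 = 0 := by nlinarith
  have h5 : ∑ i : Fin q, x i.succ ^ 2 = 0 := by nlinarith
  rw [Finset.sum_eq_zero_iff_of_nonneg (fun i _ => sq_nonneg _)] at h5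
  apply hx
  funext i
  refine Fin.cases ?_ (fun i => ?_) i
  · have : β - 1 ≠ 0 := by linarith
    simpa [this] using h4
  · simpa using h5 i (Finset.mem_univ _)

/-- Indicator of the first block. -/
noncomputable def uind (q m : ℕ) : Fin q → ℝ := fun i => if i.1 < m then 1 else 0

noncomputable def Lpos (q m : ℕ) : (ℝ × ℝ × ({i : Fin q // ¬ i.1 < m} → ℝ)) →ₗ[ℝ] (Fin (q+1) → ℝ) where
  toFun e := Fin.cons e.1 (fun i => if h : i.1 < m then e.2.1 else e.2.2 ⟨i, h⟩)
  map_add' e f := by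
    funext i
    refine Fin.cases ?_ (fun i => ?_) i
    · simp
    · simp only [Fin.cons_succ, Pi.add_apply]
      split_ifs <;> simp
  map_smul' c e := by
    funext i
    refine Fin.cases ?_ (fun i => ?_) i
    · simp
    · simp only [Fin.cons_succ, Pi.smul_apply]
      split_ifs <;> simp

noncomputable def Phi (q m : ℕ) : (Fin (q+1) → ℝ) →ₗ[ℝ] (ℝ × ℝ × ({i : Fin q // ¬ i.1 < m} → ℝ)) where
  toFun x := (x 0, ∑ i : Fin q, uind q m i * x i.succ, fun i => x i.1.succ)
  map_add' e f := by
    simp [mul_add, Finset.sum_add_distrib]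
    rfl
  map_smul' c e := by
    simp [Finset.mul_sum, mul_left_comm]
    rfl

theorem card_u (q m : ℕ) (hm : m ≤ q) : ∑ i, uind q m i = m := by
  simp only [uind]
  rw [Finset.sum_boole, Fin.card_filter_val_lt]
  simp [hm]

theorem finrank_E (q m : ℕ) (hm : m ≤ q) :
    Module.finrank ℝ (ℝ × ℝ × ({i : Fin q // ¬ i.1 < m} → ℝ)) = q - m + 2 := by
  rw [Module.finrank_prod, Module.finrank_prod, Module.finrank_fintype_fun_eq_card,
    Module.finrank_self, Fintype.card_subtype_compl, Fintype.card_subtype, Fintype.card_fin,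
    Fin.card_filter_val_lt, min_eq_right hm]
  omega

theorem case_pos (q m : ℕ) (hm : m ≤ q) (hm2 : 2 ≤ m) (β : ℝ) (hβ : 1 < β)
    (e : ℝ × ℝ × ({i : Fin q // ¬ i.1 < m} → ℝ)) (he : e ≠ 0) :
    0 < (1:ℝ) * (Lpos q m e ⬝ᵥ (Matrix.mulVec (Bmat β (Aof (uind q m))) (Lpos q m e))) := by
  rw [Bmat_form, one_mul]
  obtain ⟨x, a, y⟩ := e
  have e0 : Lpos q m (x, a, y) 0 = x := rfl
  have e1 : ∀ i : Fin q, Lpos q m (x, a, y) i.succ = if h : i.1 < m then a else y ⟨i, h⟩ :=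
    fun i => rfl
  set z : Fin q → ℝ := fun i => if h : i.1 < m then 0 else y ⟨i, h⟩ with hz
  have s1 : ∑ i, uind q m i * Lpos q m (x, a, y) i.succ = m * a := by
    rw [← card_u q m hm, Finset.sum_mul]
    refine Finset.sum_congr rfl fun i _ => ?_
    rw [e1]; simp only [uind]; split_ifs <;> simp
  have s2 : ∑ i, (1 - 2 * uind q m i) * Lpos q m (x, a, y) i.succ ^ 2
      = - (m * a ^ 2) + ∑ i, z i ^ 2 := by
    rw [← card_u q m hm, Finset.sum_mul, ← Finset.sum_neg_distrib, ← Finset.sum_add_distrib]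
    refine Finset.sum_congr rfl fun i _ => ?_
    rw [e1]; simp only [uind, hz]; split_ifs <;> simp
    ring
  rw [s1, s2, e0]
  by_contra hcon
  push Not at hcon
  have hm' : (2:ℝ) ≤ m := by exact_mod_cast hm2
  have h1 : 0 ≤ (β - 1) * x ^ 2 := mul_nonneg (by linarith) (sq_nonneg _)
  have h2 : 0 ≤ ∑ i, z i ^ 2 := Finset.sum_nonneg fun i _ => sq_nonneg _
  have h3 := sq_nonneg (x + ∑ i : Fin q, Lpos q m (x, a, y) i.succ)
  have h4 : 0 ≤ (m * (m - 1) : ℝ) * a ^ 2 :=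
    mul_nonneg (mul_nonneg (by linarith) (by linarith)) (sq_nonneg _)
  have h5 : (m * (m - 1) : ℝ) * a ^ 2 = (m * a) ^ 2 - m * a ^ 2 := by ring
  have g1 : (β - 1) * x ^ 2 = 0 := by linarith
  have g2 : ∑ i, z i ^ 2 = 0 := by linarith
  have g3 : (m * (m - 1) : ℝ) * a ^ 2 = 0 := by linarith
  rw [Finset.sum_eq_zero_iff_of_nonneg (fun i _ => sq_nonneg _)] at g2
  apply he
  have hb : β - 1 ≠ 0 := by linarith
  have hmm : (m * (m - 1) : ℝ) ≠ 0 := (mul_pos (by linarith) (by linarith)).ne'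
  have hx : x = 0 := by simpa [hb] using g1
  have ha : a = 0 := by
    rcases mul_eq_zero.1 g3 with h | h
    · exact absurd h hmm
    · simpa using h
  have hy : y = 0 := by
    funext ⟨i, hi⟩
    have := g2 i (Finset.mem_univ _)
    simpa [hz, hi] using this
  rw [hx, ha, hy]; rfl

theorem case_neg (q m : ℕ) (β : ℝ) (e : LinearMap.ker (Phi q m)) (he : e ≠ 0) :
    0 < (-1:ℝ) * ((LinearMap.ker (Phi q m)).subtype e ⬝ᵥ
      (Matrix.mulVec (Bmat β (Aof (uind q m))) ((LinearMap.ker (Phi q m)).subtype e))) := by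
  rw [Bmat_form]
  obtain ⟨x, hx⟩ := e
  simp only [Submodule.subtype_apply]
  rw [LinearMap.mem_ker] at hx
  have h0 : x 0 = 0 := congrArg Prod.fst hx
  have h1 : ∑ i : Fin q, uind q m i * x i.succ = 0 := congrArg (fun p => p.2.1) hx
  have h2 : ∀ i : Fin q, ¬ i.1 < m → x i.succ = 0 := fun i hi =>
    congrFun (congrArg (fun p => p.2.2) hx) ⟨i, hi⟩
  have h3 : ∑ i : Fin q, x i.succ = 0 := by
    rw [← h1]
    refine Finset.sum_congr rfl fun i _ => ?_
    by_cases hi : i.1 < m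
    · simp [uind, hi]
    · simp [h2 i hi]
  have h4 : ∑ i : Fin q, (1 - 2 * uind q m i) * x i.succ ^ 2 = - ∑ i : Fin q, x i.succ ^ 2 := by
    rw [← Finset.sum_neg_distrib]
    refine Finset.sum_congr rfl fun i _ => ?_
    by_cases hi : i.1 < m
    · simp [uind, hi]; ring
    · simp [h2 i hi]
  rw [h0, h1, h3, h4]
  by_contra hcon
  have h5 : ∑ i : Fin q, x i.succ ^ 2 = 0 :=
    le_antisymm (by push Not at hcon; linarith) (Finset.sum_nonneg fun i _ => sq_nonneg _)
  rw [Finset.sum_eq_zero_iff_of_nonneg (fun i _ => sq_nonneg _)] at h5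
  apply he
  apply Subtype.ext
  funext i
  refine Fin.cases h0 (fun i => ?_) i
  simpa using h5 i (Finset.mem_univ _)

theorem ncard_aux {q : ℕ} (S : Set (Fin q)) (a b : Fin q) (ha : a ∈ S) (hb : b ∈ S)
    (hab : a ≠ b) : 2 ≤ S.ncard := by
  rw [← Set.ncard_pair hab]
  exact Set.ncard_le_ncard (by rintro x (rfl | rfl) <;> assumption) (Set.toFinite _)

theorem Aof_zero_col (q d : ℕ) (b : Fin q) :
    ∑ c, Aof (fun _ : Fin q => 0) c b ^ d = (2:ℝ) ^ d + ((q - 1 : ℕ) : ℝ) := by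
  rw [← Finset.add_sum_erase _ _ (Finset.mem_univ b)]
  have : ∀ c ∈ Finset.univ.erase b, Aof (fun _ : Fin q => 0) c b ^ d = 1 := by
    intro c hc
    simp [Aof, Finset.ne_of_mem_erase hc]
  rw [Finset.sum_congr rfl this]
  simp [Aof, Finset.card_erase_of_mem]
  norm_num

theorem Aof_col (q m d : ℕ) (hm : m ≤ q) (b : Fin q) :
    ∑ c, Aof (uind q m) c b ^ d =
      q + (if b.1 < m then ((m:ℝ) - 1) else 1) * ((2:ℝ) ^ d - 1) := by
  have h : ∀ c, Aof (uind q m) c b ^ d =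
      1 + ((if b.1 < m then uind q m c else 0) +
        (if c = b then (if b.1 < m then -1 else 1) else 0)) * ((2:ℝ) ^ d - 1) := by
    intro c
    by_cases hcb : c = b
    · subst hcb
      by_cases hc : c.1 < m
      · simp [Aof, uind, hc]; norm_num
      · simp [Aof, uind, hc]; norm_num
    · by_cases hc : c.1 < m <;> by_cases hb : b.1 < m <;> simp [Aof, uind, hc, hb, hcb]
      norm_num
  rw [Finset.sum_congr rfl fun c _ => h c, Finset.sum_add_distrib, ← Finset.sum_mul,
    Finset.sum_add_distrib]
  have := card_u q m hm
  by_cases hb : b.1 < m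
  · simp [hb, this]; ring_nf; simp
  · simp [hb]

theorem stmt12 (q d : ℕ) (hq : 2 ≤ q) (hd : 2 ≤ d) (β : ℝ) (hβ : 1 < β)
    (k : ℕ) (hk : k ≤ q - 1) :
    ∃ A : Matrix (Fin q) (Fin q) ℝ, A.IsSymm ∧
      (∀ c b, (1:ℝ) ≤ A c b) ∧ (∃ c b, (1:ℝ) < A c b) ∧
      2 ≤ (Mset d A).ncard ∧
      (∃ c, ∃ a₁ ∈ Mset d A, ∃ a₂ ∈ Mset d A, A c a₁ ≠ A c a₂) ∧
      ∃ hB : (Bmat β A).IsHermitian,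
        (Finset.univ.filter (fun i => 0 < hB.eigenvalues i)).card = k + 2 ∧
        (Finset.univ.filter (fun i => hB.eigenvalues i < 0)).card = q - k - 1 := by
  let i0 : Fin q := ⟨0, by omega⟩
  let i1 : Fin q := ⟨1, by omega⟩
  have h01 : i0 ≠ i1 := by simp [i0, i1]
  rcases Nat.lt_or_ge k (q - 1) with hk' | hk'
  · obtain ⟨m, hm⟩ : ∃ m, m = q - k := ⟨_, rfl⟩
    have hmq : m ≤ q := by omega
    have hm2 : 2 ≤ m := by omega
    have hM : ∀ b : Fin q, b.1 < m → b ∈ Mset d (Aof (uind q m)) := by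
      intro b hb b'
      rw [Aof_col q m d hmq, Aof_col q m d hmq, if_pos hb]
      have : (1:ℝ) ≤ 2 ^ d := one_le_pow₀ (by norm_num)
      have hm' : (2:ℝ) ≤ m := by exact_mod_cast hm2
      split_ifs
      · exact le_rfl
      · have := mul_le_mul_of_nonneg_right (show (1:ℝ) ≤ m - 1 by linarith)
          (show (0:ℝ) ≤ 2 ^ d - 1 by linarith)
        linarith
    have hM0 := hM i0 (show 0 < m by omega)
    have hM1 := hM i1 (show 1 < m by omega)
    have v00 : Aof (uind q m) i0 i0 = 1 := by
      have : (i0 : ℕ) < m := show 0 < m by omega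
      simp [Aof, uind, this]; norm_num
    have v01 : Aof (uind q m) i0 i1 = 2 := by
      have : (i0 : ℕ) < m := show 0 < m by omega
      have h' : (i1 : ℕ) < m := show 1 < m by omega
      simp [Aof, uind, this, h', h01]; norm_num
    refine ⟨Aof (uind q m), Aof_symm _, ?_, ⟨i0, i1, by rw [v01]; norm_num⟩,
      ncard_aux _ i0 i1 hM0 hM1 h01, ⟨i0, i0, hM0, i1, hM1, by rw [v00, v01]; norm_num⟩,
      Bmat_herm _ _ (Aof_symm _), ?_⟩
    · intro c b
      by_cases hcb : c = b
      · subst hcb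
        by_cases hc : c.1 < m
        · simp [Aof, uind, hc]; norm_num
        · simp [Aof, uind, hc]
      · by_cases hc : c.1 < m <;> by_cases hb : b.1 < m <;> simp [Aof, uind, hc, hb, hcb]
    · refine count_aux _ _ _ (by omega) ?_ ?_
      · have := inertia_aux (Bmat_herm β _ (Aof_symm (uind q m))) 1 (Lpos q m)
          (case_pos q m hmq hm2 β hβ)
        rw [finrank_E q m hmq] at this
        omega
      · have := inertia_aux (Bmat_herm β _ (Aof_symm (uind q m))) (-1)
          (LinearMap.ker (Phi q m)).subtype (case_neg q m β)
        have h1 := LinearMap.finrank_range_add_finrank_ker (Phi q m)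
        have h2 := Submodule.finrank_le (LinearMap.range (Phi q m))
        rw [finrank_E q m hmq] at h2
        rw [Module.finrank_fintype_fun_eq_card, Fintype.card_fin] at h1
        omega
  · have hM : ∀ b : Fin q, b ∈ Mset d (Aof (fun _ : Fin q => 0)) := by
      intro b b'
      rw [Aof_zero_col, Aof_zero_col]
    have v00 : Aof (fun _ : Fin q => 0) i0 i0 = 2 := by simp [Aof]; norm_num
    have v01 : Aof (fun _ : Fin q => 0) i0 i1 = 1 := by simp [Aof, h01]
    refine ⟨Aof (fun _ => 0), Aof_symm _, ?_, ⟨i0, i0, by rw [v00]; norm_num⟩,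
      ncard_aux _ i0 i1 (hM _) (hM _) h01,
      ⟨i0, i0, hM _, i1, hM _, by rw [v00, v01]; norm_num⟩,
      Bmat_herm _ _ (Aof_symm _), ?_⟩
    · intro c b
      by_cases hcb : c = b <;> simp [Aof, hcb]
    · refine count_aux _ _ _ (by omega) ?_ ?_
      · have := inertia_aux (Bmat_herm β _ (Aof_symm (fun _ : Fin q => 0))) 1 LinearMap.id
          (case_pd q β hβ)
        rw [Module.finrank_fintype_fun_eq_card, Fintype.card_fin] at this
        omega
      · have : q - k - 1 = 0 := by omega
        rw [this]; exact Nat.zero_le _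
end

section
/- For every integer q ≥ 2 and every real 0 < β < 1, one has ((q−1)/log(1/β)) · log( (q−1) / ((q−1) − (1−β)) ) ≥ √β. -/
/-- Numerical claim. For every integer `q ≥ 2` and every real
`0 < β < 1`, `((q-1)/log(1/β)) · log((q-1)/((q-1)-(1-β))) ≥ √β`. -/
theorem stmt13 (q : ℕ) (hq : 2 ≤ q) (β : ℝ) (hβ0 : 0 < β) (hβ1 : β < 1) :
    Real.sqrt β ≤
      ((q:ℝ) - 1) / Real.log (1 / β) *
        Real.log (((q:ℝ) - 1) / (((q:ℝ) - 1) - (1 - β))) := by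
  have hq' : (2:ℝ) ≤ q := by exact_mod_cast hq
  obtain ⟨m, hm⟩ : ∃ m : ℝ, m = (q:ℝ) - 1 := ⟨_, rfl⟩
  rw [← hm]
  have hm1 : 1 ≤ m := by linarith
  have hm0 : 0 < m := by linarith
  have hd : 0 < m - (1 - β) := by linarith
  have hL : 0 < Real.log (1 / β) := Real.log_pos (by rw [lt_div_iff₀ hβ0]; linarith)
  rw [div_mul_eq_mul_div, le_div_iff₀ hL]
  have h1 : 1 - β ≤ m * Real.log (m / (m - (1 - β))) := by
    have h := Real.one_sub_inv_le_log_of_pos (div_pos hm0 hd)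
    have h2 := mul_le_mul_of_nonneg_left h hm0.le
    have h3 : m * (1 - (m / (m - (1 - β)))⁻¹) = 1 - β := by
      rw [inv_div]; field_simp; ring
    linarith
  refine le_trans ?_ h1
  have hs0 : 0 < Real.sqrt β := Real.sqrt_pos.mpr hβ0
  have hs2 : Real.sqrt β * Real.sqrt β = β := Real.mul_self_sqrt hβ0.le
  have hs1 : Real.sqrt β < 1 := by nlinarith
  generalize Real.sqrt β = s at *
  subst hs2
  have hlog : Real.log (1 / (s * s)) = 2 * Real.log s⁻¹ := by
    rw [one_div, Real.log_inv, Real.log_inv, Real.log_mul hs0.ne' hs0.ne']; ring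
  have hx : 0 ≤ Real.log s⁻¹ := by linarith
  have h := Real.self_le_sinh_iff.mpr hx
  rw [Real.sinh_log (inv_pos.mpr hs0), inv_inv] at h
  rw [hlog]
  have h2 := mul_le_mul_of_nonneg_left h hs0.le
  have h3 : s * ((s⁻¹ - s) / 2) = (1 - s * s) / 2 := by field_simp
  linarith
end

section
/- Fix integers q ≥ 2 and d ≥ 2q and a real 0 < ε ≤ 1/4. Define, for 0 < β < 1, Ξ_{d,q,ε}(β) := ((q−1)/log(1/β)) · log( (ε β^{−d/(10q)} + (1−ε))^{1/d} / (ε β^{1/(10q(q−1))} + (1−ε)) ). Then Ξ_{d,q,ε} is a decreasing (antitone) function of β on the interval [1 − q/(d+1), 1), and moreover Ξ_{d,q,ε}(1 − q/(d+1)) ≤ ε. -/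
/-- The function `Ξ_{d,q,ε}(β)` from the numerical claim:
`Ξ_{d,q,ε}(β) = ((q-1)/log(1/β)) · log((ε β^{-d/(10q)} + (1-ε))^{1/d} / (ε β^{1/(10q(q-1))} + (1-ε)))`. -/
noncomputable def Xi (d q : ℕ) (ε : ℝ) (β : ℝ) : ℝ :=
  ((q:ℝ) - 1) / Real.log (1 / β) *
    Real.log ((ε * β ^ (-(d:ℝ) / (10 * (q:ℝ))) + (1 - ε)) ^ ((1:ℝ) / (d:ℝ)) /
      (ε * β ^ ((1:ℝ) / (10 * (q:ℝ) * ((q:ℝ) - 1))) + (1 - ε)))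

lemma xi_cvx (ε a b c T : ℝ) (hε0 : 0 < ε) (hε : ε ≤ 1/4) (ha : 0 ≤ a) (hb : 0 ≤ b)
    (hc : b^2 ≤ c * a^2) (hT : a * T ≤ 1/5) :
    ConvexOn ℝ (Set.Icc 0 T) (fun t => c * Real.log (ε * Real.exp (a*t) + (1-ε))
      - Real.log (ε * Real.exp (-b*t) + (1-ε))) := by
  have hD : ∀ s : ℝ, 0 < ε * Real.exp s + (1-ε) := fun s => by
    have := Real.exp_pos s
    have := mul_pos hε0 this
    linarith
  have hE : ∀ k t : ℝ, HasDerivAt (fun t => ε * Real.exp (k*t)) (ε * (Real.exp (k*t) * k)) t := by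
    intro k t
    have h := ((hasDerivAt_id t).const_mul k).exp.const_mul ε
    simpa using h
  have hL : ∀ k t : ℝ, HasDerivAt (fun t => Real.log (ε * Real.exp (k*t) + (1-ε)))
      (ε * (Real.exp (k*t) * k) / (ε * Real.exp (k*t) + (1-ε))) t := fun k t =>
    ((hE k t).add_const (1-ε)).log (hD _).ne'
  have hL2 : ∀ k t : ℝ, HasDerivAt (fun t => ε * (Real.exp (k*t) * k) / (ε * Real.exp (k*t) + (1-ε)))
      (k^2 * (ε * (1-ε)) * (Real.exp (k*t) / (ε * Real.exp (k*t) + (1-ε))^2)) t := by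
    intro k t
    have h1 : HasDerivAt (fun t => ε * (Real.exp (k*t) * k)) (ε * (Real.exp (k*t) * k) * k) t := by
      have := (hE k t).mul_const k
      have e : (fun t => ε * (Real.exp (k*t) * k)) = fun y => ε * Real.exp (k * y) * k := by
        ext x; ring
      rw [e]; exact this
    have h := h1.div ((hE k t).add_const (1-ε)) (hD _).ne'
    refine h.congr_deriv ?_
    have := (hD (k*t)).ne'
    field_simp
    ring
  refine convexOn_of_hasDerivWithinAt2_nonneg (convex_Icc 0 T) ?_
    (fun t _ => (((hL a t).const_mul c).sub (hL (-b) t)).hasDerivWithinAt)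
    (fun t _ => (((hL2 a t).const_mul c).sub (hL2 (-b) t)).hasDerivWithinAt) ?_
  · intro t _
    exact (((hL a t).const_mul c).sub (hL (-b) t)).continuousAt.continuousWithinAt
  · intro t ht
    rw [interior_Icc] at ht
    obtain ⟨h0, h1⟩ := ht
    have e1 : 1 ≤ Real.exp (a*t) / (ε * Real.exp (a*t) + (1-ε))^2 := by
      rw [le_div_iff₀ (pow_pos (hD _) 2)]
      have l1 : 1 ≤ Real.exp (a*t) := Real.one_le_exp (by positivity)
      have l2 : Real.exp (a*t) ≤ 3 := by
        have : Real.exp (a*t) ≤ Real.exp 1 := Real.exp_le_exp.2 (by nlinarith)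
        linarith [Real.exp_one_lt_d9]
      generalize Real.exp (a*t) = y at *
      have : 0 ≤ (y-1) * (1 - 2*ε - ε^2*(y-1)) := by
        apply mul_nonneg (by linarith)
        nlinarith
      nlinarith
    have e2 : Real.exp (-b*t) / (ε * Real.exp (-b*t) + (1-ε))^2 ≤ 1 := by
      rw [div_le_one₀ (pow_pos (hD _) 2)]
      have l1 : Real.exp (-b*t) ≤ 1 := Real.exp_le_one_iff.2 (by nlinarith)
      have l2 := Real.exp_pos (-b*t)
      generalize Real.exp (-b*t) = y at *
      have : 0 ≤ (1-y) * (1 - 2*ε + ε^2*(1-y)) := by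
        apply mul_nonneg (by linarith)
        have : 0 ≤ ε^2*(1-y) := mul_nonneg (by positivity) (by linarith)
        linarith
      nlinarith
    have hk : 0 ≤ ε * (1-ε) := mul_nonneg hε0.le (by linarith)
    have hca : 0 ≤ c * a^2 * (ε*(1-ε)) := mul_nonneg (le_trans (sq_nonneg b) hc) hk
    have m1 := mul_le_mul_of_nonneg_left e1 hca
    have m2 := mul_le_mul_of_nonneg_left e2 (mul_nonneg (sq_nonneg b) hk)
    have m3 := mul_le_mul_of_nonneg_right hc hk
    nlinarith

lemma xi_bound (ε a b c T : ℝ) (hε0 : 0 < ε) (hε : ε ≤ 1/4) (ha : 0 ≤ a) (hb : 0 ≤ b)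
    (hc : 0 ≤ c) (hT0 : 0 < T) (hT : a * T ≤ 1/5) (hbT : b * T ≤ 1) :
    c * Real.log (ε * Real.exp (a*T) + (1-ε)) - Real.log (ε * Real.exp (-b*T) + (1-ε))
     ≤ 2 * ε * T * (c * a + b) := by
  have hD : ∀ s : ℝ, 0 < ε * Real.exp s + (1-ε) := fun s => by
    have := Real.exp_pos s
    have := mul_pos hε0 this
    linarith
  have A : Real.log (ε * Real.exp (a*T) + (1-ε)) ≤ 2 * ε * T * a := by
    have h1 := Real.log_le_sub_one_of_pos (hD (a*T))
    have h2 : Real.exp (a*T) ≤ 1 + 2 * (a*T) := by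
      have h3 := Real.add_one_le_exp (-(a*T))
      have h4 : Real.exp (a*T) * Real.exp (-(a*T)) = 1 := by rw [← Real.exp_add]; simp
      have h5 := Real.exp_pos (a*T)
      have h6 : 0 ≤ a*T := by positivity
      have h7 : Real.exp (a*T) * (-(a*T)+1) ≤ 1 := (mul_le_mul_of_nonneg_left h3 h5.le).trans h4.le
      generalize a*T = s at *
      have : Real.exp s * (1-s) ≤ (1+2*s) * (1-s) := by nlinarith
      exact le_of_mul_le_mul_right this (by linarith)
    nlinarith
  have B : -Real.log (ε * Real.exp (-b*T) + (1-ε)) ≤ 2 * ε * T * b := by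
    have h1 := Real.log_le_sub_one_of_pos (inv_pos.2 (hD (-b*T)))
    rw [Real.log_inv] at h1
    refine h1.trans ?_
    rw [sub_le_iff_le_add, inv_le_comm₀ (hD _) (by positivity)]
    have h3 := Real.add_one_le_exp (-b*T)
    have h6 : 0 ≤ b*T := by positivity
    have h8 : 1 - ε*(b*T) ≤ ε * Real.exp (-b*T) + (1-ε) := by nlinarith
    refine le_trans ?_ h8
    rw [inv_le_iff_one_le_mul₀ (by positivity)]
    have : 0 ≤ ε*(b*T) := by positivity
    have h9 : ε*(b*T) ≤ 1/4 := by nlinarith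
    have h10 : 2 * ε * T * b = 2 * (ε*(b*T)) := by ring
    rw [h10]
    nlinarith
  nlinarith [mul_le_mul_of_nonneg_left A hc]

/-- Numerical claim. For `q ≥ 2`, `d ≥ 2q` and `0 < ε ≤ 1/4`,
the function `Ξ_{d,q,ε}` is antitone on `[1 - q/(d+1), 1)` and
`Ξ_{d,q,ε}(1 - q/(d+1)) ≤ ε`. -/
theorem stmt14 (q d : ℕ) (hq : 2 ≤ q) (hd : 2 * q ≤ d) (ε : ℝ)
    (hε0 : 0 < ε) (hε : ε ≤ 1/4) :
    AntitoneOn (Xi d q ε) (Set.Ico (1 - (q:ℝ) / ((d:ℝ) + 1)) 1) ∧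
    Xi d q ε (1 - (q:ℝ) / ((d:ℝ) + 1)) ≤ ε := by
  have hq' : (2:ℝ) ≤ q := by exact_mod_cast hq
  have hd' : 2 * (q:ℝ) ≤ d := by exact_mod_cast hd
  unfold Xi
  generalize (q:ℝ) = Q at *
  generalize (d:ℝ) = D at *
  have hQ1 : 0 < Q - 1 := by linarith
  have hD0 : 0 < D := by linarith
  have hQ0 : 0 < Q := by linarith
  set β₀ : ℝ := 1 - Q / (D+1) with hβ₀
  have hβe : β₀ = (D+1-Q)/(D+1) := by rw [hβ₀]; field_simp
  have hβpos : 0 < β₀ := by rw [hβe]; apply div_pos <;> linarith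
  have hβlt : β₀ < 1 := by
    have : 0 < Q/(D+1) := by positivity
    linarith
  set a := D / (10*Q) with ha
  set b := 1 / (10*Q*(Q-1)) with hb
  have ha0 : 0 ≤ a := by positivity
  have hb0 : 0 ≤ b := by positivity
  set T := -Real.log β₀ with hT
  have hT0 : 0 < T := by have := Real.log_neg hβpos hβlt; linarith
  have hTle : T ≤ Q/(D+1-Q) := by
    have h1 := Real.log_le_sub_one_of_pos (inv_pos.2 hβpos)
    rw [Real.log_inv] at h1
    refine h1.trans (le_of_eq ?_)
    rw [hβe]
    have : D+1-Q ≠ 0 := by linarith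
    field_simp
    ring
  have hDQ : 0 < D+1-Q := by linarith
  have haT : a * T ≤ 1/5 := by
    refine (mul_le_mul_of_nonneg_left hTle ha0).trans ?_
    have : a * (Q/(D+1-Q)) = D / (10*(D+1-Q)) := by rw [ha]; field_simp
    rw [this, div_le_div_iff₀ (by positivity) (by norm_num)]
    linarith
  have hT1 : T ≤ 1 := hTle.trans (by rw [div_le_one₀ hDQ]; linarith)
  have hb1 : b ≤ 1 := by
    rw [hb, div_le_one₀ (by positivity)]
    nlinarith
  have hbT : b * T ≤ 1 := by nlinarith
  have hc : b^2 ≤ (1/D) * a^2 := by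
    have e1 : b^2 = 1/(100*Q^2) * (1/(Q-1)^2) := by rw [hb]; field_simp; norm_num
    have e2 : (1/D) * a^2 = 1/(100*Q^2) * D := by rw [ha]; field_simp; norm_num
    rw [e1, e2]
    apply mul_le_mul_of_nonneg_left _ (by positivity)
    rw [div_le_iff₀ (by positivity)]
    have : 1 ≤ (Q-1)^2 := by nlinarith
    nlinarith
  have key : ∀ β : ℝ, 0 < β → (Q-1) / Real.log (1/β) *
      Real.log ((ε * β ^ (-D / (10 * Q)) + (1 - ε)) ^ (1 / D) / (ε * β ^ b + (1 - ε))) =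
      (Q-1) * (((1/D) * Real.log (ε * Real.exp (a*(-Real.log β)) + (1-ε))
      - Real.log (ε * Real.exp (-b*(-Real.log β)) + (1-ε))) / (-Real.log β)) := by
    intro β hβ
    have p1 : 0 < ε * β ^ (-D / (10 * Q)) + (1 - ε) := by
      have := mul_pos hε0 (Real.rpow_pos_of_pos hβ (-D / (10 * Q))); linarith
    have p2 : 0 < ε * β ^ b + (1 - ε) := by
      have := mul_pos hε0 (Real.rpow_pos_of_pos hβ b); linarith
    rw [Real.log_div (Real.rpow_pos_of_pos p1 _).ne' p2.ne', Real.log_rpow p1,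
      Real.rpow_def_of_pos hβ, Real.rpow_def_of_pos hβ, one_div β, Real.log_inv]
    have r1 : Real.log β * (-D / (10*Q)) = a * (-Real.log β) := by rw [ha]; ring
    have r2 : Real.log β * b = -b * (-Real.log β) := by ring
    rw [r1, r2]
    ring
  have cv := xi_cvx ε a b (1/D) T hε0 hε ha0 hb0 hc haT
  have bd := xi_bound ε a b (1/D) T hε0 hε ha0 hb0 (by positivity) hT0 haT hbT
  constructor
  · intro x hx y hy hxy
    have hx0 : 0 < x := hβpos.trans_le hx.1
    have hy0 : 0 < y := hβpos.trans_le hy.1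
    simp only []
    rw [key x hx0, key y hy0]
    apply mul_le_mul_of_nonneg_left _ hQ1.le
    have hs0 : 0 < -Real.log y := by have := Real.log_neg hy0 hy.2; linarith
    have hst : -Real.log y ≤ -Real.log x := by have := Real.log_le_log hx0 hxy; linarith
    have htT : -Real.log x ≤ T := by have := Real.log_le_log hβpos hx.1; linarith
    generalize -Real.log y = s at *
    generalize -Real.log x = t at *
    have ht0 : 0 < t := hs0.trans_le hst
    have m1 : t ∈ Set.Icc 0 T := ⟨ht0.le, htT⟩
    have m2 : (0:ℝ) ∈ Set.Icc 0 T := ⟨le_rfl, hT0.le⟩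
    have w1 : 0 ≤ s/t := by positivity
    have w2 : 0 ≤ 1 - s/t := by rw [sub_nonneg, div_le_one₀ ht0]; exact hst
    have h := cv.2 m1 m2 w1 w2 (by ring)
    have e : s / t * t = s := by field_simp
    simp only [smul_eq_mul, mul_zero, add_zero, e, Real.exp_zero, mul_one, add_sub_cancel,
      Real.log_one, sub_zero] at h
    rw [div_le_iff₀ hs0]
    refine h.trans (le_of_eq ?_)
    ring
  · rw [key β₀ hβpos]
    have : (Q-1) * (2 * ε * T * ((1/D) * a + b) / T) ≤ ε := by
      have e : (Q-1) * (2 * ε * T * ((1/D) * a + b) / T) = ε * (1/5) := by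
        rw [ha, hb]; field_simp; ring
      rw [e]; linarith
    refine le_trans ?_ this
    apply mul_le_mul_of_nonneg_left _ hQ1.le
    exact div_le_div_of_nonneg_right bd hT0.le
end
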